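/- (Capacity comparison for unions of well-separated boxes.) For every δ > 0 there exist K_0 and L_1 such that for all integers K ≥ K_0 and L ≥ L_1 and every nonempty finite set 𝒞 ⊆ Lℤ^d whose points are at mutual sup-distance at least KL, one has (1 − δ) ≤ d · cap_{ℤ^d}(C) / cap(Γ) ≤ (1 + δ), where C = ∪_{z∈𝒞} B_z and Γ = ∪_{z∈𝒞} B̂_z. Equivalently, liminf_{K,L→∞} inf_𝒞 d·cap_{ℤ^d}(C)/cap(Γ) ≥ 1 and limsup_{K,L→∞} sup_𝒞 d·cap_{ℤ^d}(C)/cap(Γ) ≤ 1, the infimum and supremum being over all such 𝒞. -/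

import Mathlib

open MeasureTheory Set
open scoped ENNReal

noncomputable section

/-- `n`-step transition probability of the simple random walk on `ℤ^d` started at `0`. -/
def srwP (d : ℕ) : ℕ → (Fin d → ℤ) → ℝ
  | 0, x => if x = 0 then 1 else 0
  | n + 1, x =>
      (∑ i : Fin d, (srwP d n (x + Pi.single i 1) + srwP d n (x - Pi.single i 1))) / (2 * d)

/-- the Green function `g̃(x)` of the simple random walk on `ℤ^d`: the expected number of
visits to `x` starting from `0`. -/
def greenZ (d : ℕ) (x : Fin d → ℤ) : ℝ := ∑' n : ℕ, srwP d n x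

/-- the simple random walk capacity of a finite set `F ⊆ ℤ^d`: the capacity attached to the
discrete Green function `g̃`, i.e. the inverse of the minimal `g̃`-energy of probability
weights carried by `F`. -/
def discCap (d : ℕ) (F : Finset (Fin d → ℤ)) : ℝ :=
  (sInf {e : ℝ | ∃ w : (Fin d → ℤ) → ℝ, (∀ x, 0 ≤ w x) ∧ (∀ x ∉ F, w x = 0) ∧
      (∑ x ∈ F, w x) = 1 ∧ e = ∑ x ∈ F, ∑ y ∈ F, greenZ d (y - x) * w x * w y})⁻¹

/-- the normalizing constant of the Brownian Green function. -/
def greenK (d : ℕ) : ℝ := Real.Gamma ((d:ℝ)/2 - 1) / (2 * Real.pi ^ ((d:ℝ)/2))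

/-- the Brownian Green function `g(x,y)` of `ℝ^d` (Euclidean distance), valued in `ℝ≥0∞`. -/
def greenE (d : ℕ) (x y : Fin d → ℝ) : ℝ≥0∞ :=
  if x = y then ⊤
  else ENNReal.ofReal (greenK d * Real.sqrt (∑ i, (x i - y i)^2) ^ (2 - (d:ℝ)))

/-- the Brownian (Newtonian) capacity. -/
def brCap (d : ℕ) (A : Set (Fin d → ℝ)) : ℝ≥0∞ :=
  (⨅ μ ∈ {μ : Measure (Fin d → ℝ) | IsProbabilityMeasure μ ∧ μ Aᶜ = 0},
    ∫⁻ x, ∫⁻ y, greenE d x y ∂μ ∂μ)⁻¹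

/-- the discrete `L`-box `B_z = z + [0,L)^d ∩ ℤ^d`. -/
def boxZ (d L : ℕ) (z : Fin d → ℤ) : Finset (Fin d → ℤ) :=
  Finset.Icc z (fun i => z i + L - 1)

/-- the `ℝ^d`-filling `B̂_z = z + [0,L]^d`. -/
def boxR (d L : ℕ) (z : Fin d → ℤ) : Set (Fin d → ℝ) :=
  Set.Icc (fun i => (z i : ℝ)) (fun i => (z i : ℝ) + L)

/-!
Both capacities are inverses of minimal energies, so it suffices to compare the energies of
probability measures on the two unions of boxes for the kernels `g̃` and `g`.

Poissonizing the number of steps of the walk makes its coordinates independent, and a local limit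
theorem for one coordinate, summed over time, gives `g̃(x) ~ d * g(x)` as `x → ∞`. Hence the two
energies agree on pairs of points that are far apart. Nearby pairs are dealt with by spreading
each point mass out over a large but fixed distance before the energies are compared: with the law
of the walk after `s` steps on the lattice, with a truncated Gaussian in space. Spreading does not
increase the energies since both kernels are superharmonic, and it is confined to the boxes if
each box is first contracted slightly towards its centre. As distinct boxes are at distance at
least a multiple of their side, the contraction changes mutual distances only by a factor close
to one.
-/

open Filter ProbabilityTheory
open scoped Topology Real NNReal

variable {d : ℕ}

/-! ### Fourier representation of the simple random walk -/

/-- The uniform probability measure on `(-π, π]`, the dual group of `ℤ`. -/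
def angleMeasure : Measure ℝ := volume[|Ioc (-π) π]

instance : IsProbabilityMeasure angleMeasure :=
  cond_isProbabilityMeasure_of_finite (by simp [Real.pi_pos]) (by simp)

lemma integral_angleMeasure {E : Type*} [NormedAddCommGroup E] [NormedSpace ℝ E] (f : ℝ → E) :
    ∫ θ, f θ ∂angleMeasure = (2 * π)⁻¹ • ∫ θ in (-π)..π, f θ := by
  rw [angleMeasure, ProbabilityTheory.cond, integral_smul_measure,
    intervalIntegral.integral_of_le (by linarith [Real.pi_pos]), Real.volume_Ioc,
    ENNReal.toReal_inv, ENNReal.toReal_ofReal (by linarith [Real.pi_pos])]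
  congr 2
  ring

lemma integral_cexp_angleMeasure (k : ℤ) :
    ∫ θ : ℝ, Complex.exp (Complex.I * k * θ) ∂angleMeasure = if k = 0 then 1 else 0 := by
  split_ifs with hk
  · simp [hk]
  · have h_periodic : Complex.exp (Complex.I * k * (π : ℝ)) =
        Complex.exp (Complex.I * k * (-π : ℝ)) :=
      Complex.exp_eq_exp_iff_exists_int.2 ⟨k, by push_cast; ring⟩
    rw [integral_angleMeasure, integral_exp_mul_complex (by simp [hk]), h_periodic]
    simp

/-- The uniform probability measure on the dual torus of `ℤ^d`. -/
def torusMeasure (d : ℕ) : Measure (Fin d → ℝ) := Measure.pi fun _ ↦ angleMeasure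

instance : IsProbabilityMeasure (torusMeasure d) := by
  unfold torusMeasure
  infer_instance

/-- The character `θ ↦ exp (i x · θ)` of the dual torus attached to `x ∈ ℤ^d`. -/
def latticeChar (x : Fin d → ℤ) (θ : Fin d → ℝ) : ℂ :=
  ∏ i, Complex.exp (Complex.I * x i * θ i)

lemma norm_cexp_I_mul (k : ℤ) (θ : ℝ) : ‖Complex.exp (Complex.I * k * θ)‖ = 1 := by
  rw [show Complex.I * k * θ = ((k * θ : ℝ) : ℂ) * Complex.I by push_cast; ring]
  exact Complex.norm_exp_ofReal_mul_I _

lemma norm_latticeChar (x : Fin d → ℤ) (θ : Fin d → ℝ) : ‖latticeChar x θ‖ = 1 := by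
  rw [latticeChar, norm_prod]
  exact Finset.prod_eq_one fun i _ ↦ norm_cexp_I_mul _ _

@[fun_prop]
lemma continuous_latticeChar (x : Fin d → ℤ) : Continuous (latticeChar x) := by
  unfold latticeChar
  fun_prop

lemma latticeChar_add (x y : Fin d → ℤ) (θ : Fin d → ℝ) :
    latticeChar (x + y) θ = latticeChar x θ * latticeChar y θ := by
  simp only [latticeChar, ← Finset.prod_mul_distrib, ← Complex.exp_add, Pi.add_apply,
    Int.cast_add, mul_add, add_mul]

lemma latticeChar_single (i : Fin d) (a : ℤ) (θ : Fin d → ℝ) :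
    latticeChar (Pi.single i a) θ = Complex.exp (Complex.I * a * θ i) := by
  rw [latticeChar, Finset.prod_eq_single_of_mem i (Finset.mem_univ i)]
  · rw [Pi.single_eq_same]
  · intro j _ hj
    simp [Pi.single_eq_of_ne hj]

lemma integrable_latticeChar (x : Fin d → ℤ) : Integrable (latticeChar x) (torusMeasure d) :=
  .of_bound (by fun_prop) 1 (.of_forall fun θ ↦ (norm_latticeChar x θ).le)

/-- The characteristic function of one step of the simple random walk on `ℤ^d`. -/
def stepChar (θ : Fin d → ℝ) : ℝ := (∑ i, Real.cos (θ i)) / d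

@[fun_prop]
lemma continuous_stepChar : Continuous (stepChar (d := d)) := by
  unfold stepChar
  fun_prop

lemma abs_stepChar_le_one (θ : Fin d → ℝ) : |stepChar θ| ≤ 1 := by
  rw [stepChar, abs_div, Nat.abs_cast]
  refine div_le_one_of_le₀ ?_ (by positivity)
  calc |∑ i, Real.cos (θ i)| ≤ ∑ i, |Real.cos (θ i)| := Finset.abs_sum_le_sum_abs _ _
    _ ≤ ∑ _i : Fin d, 1 := Finset.sum_le_sum fun i _ ↦ Real.abs_cos_le_one _
    _ = d := by simp

lemma integrable_stepChar_pow_mul (n : ℕ) (x : Fin d → ℤ) :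
    Integrable (fun θ ↦ (stepChar θ : ℂ) ^ n * latticeChar x θ) (torusMeasure d) := by
  refine .of_bound (by fun_prop) 1 (.of_forall fun θ ↦ ?_)
  rw [norm_mul, norm_latticeChar, mul_one, norm_pow, Complex.norm_real]
  exact pow_le_one₀ (norm_nonneg _) (abs_stepChar_le_one θ)

lemma sum_latticeChar_neighbors (hd : 0 < d) (x : Fin d → ℤ) (θ : Fin d → ℝ) :
    (∑ i, (latticeChar (x + Pi.single i 1) θ + latticeChar (x - Pi.single i 1) θ)) / (2 * d) =
      stepChar θ * latticeChar x θ := by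
  have h_pair (i : Fin d) :
      latticeChar (x + Pi.single i 1) θ + latticeChar (x - Pi.single i 1) θ =
        2 * (Real.cos (θ i) : ℂ) * latticeChar x θ := by
    rw [sub_eq_add_neg, ← Pi.single_neg, latticeChar_add, latticeChar_add, latticeChar_single,
      latticeChar_single, Complex.ofReal_cos, Complex.two_cos]
    push_cast
    ring_nf
  have hd' : (d : ℂ) ≠ 0 := by exact_mod_cast hd.ne'
  simp only [h_pair, ← Finset.sum_mul, ← Finset.mul_sum, stepChar, Complex.ofReal_div,
    Complex.ofReal_sum, Complex.ofReal_natCast]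
  field_simp

lemma srwP_succ (d n : ℕ) (x : Fin d → ℤ) : srwP d (n + 1) x =
    (∑ i, (srwP d n (x + Pi.single i 1) + srwP d n (x - Pi.single i 1))) / (2 * d) := rfl

lemma srwP_nonneg (d n : ℕ) (x : Fin d → ℤ) : 0 ≤ srwP d n x := by
  induction n generalizing x with
  | zero => simp only [srwP]; split_ifs <;> norm_num
  | succ n ih =>
    rw [srwP_succ]
    exact div_nonneg (Finset.sum_nonneg fun i _ ↦ add_nonneg (ih _) (ih _)) (by positivity)

lemma srwP_eq_integral (hd : 0 < d) (n : ℕ) (x : Fin d → ℤ) :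
    (srwP d n x : ℂ) = ∫ θ, (stepChar θ : ℂ) ^ n * latticeChar x θ ∂torusMeasure d := by
  induction n generalizing x with
  | zero =>
    simp only [pow_zero, one_mul, srwP, latticeChar, torusMeasure]
    rw [integral_fintype_prod_eq_prod
      (f := fun i (θ : ℝ) ↦ Complex.exp (Complex.I * x i * (θ : ℂ)))]
    simp only [integral_cexp_angleMeasure]
    simp only [Finset.prod_ite_zero, funext_iff, Pi.zero_apply, Finset.mem_univ, true_imp_iff,
      Finset.prod_const_one]
    split_ifs <;> simp
  | succ n ih =>
    rw [srwP_succ]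
    push_cast
    simp only [ih, ← integral_add (integrable_stepChar_pow_mul n _)
      (integrable_stepChar_pow_mul n _), ← mul_add]
    rw [← integral_finsetSum, ← integral_div]
    · congr 1 with θ
      rw [pow_succ, mul_assoc, ← sum_latticeChar_neighbors hd, ← mul_div_assoc, Finset.mul_sum]
    · intro i _
      simp only [mul_add]
      exact (integrable_stepChar_pow_mul n _).add (integrable_stepChar_pow_mul n _)

/-! ### The continuous-time heat kernel of `ℤ^d` -/

/-- The Fourier symbol at time `t` of the continuous-time walk on `ℤ` with jump rate one. -/
def heatSymbol (t θ : ℝ) : ℝ := Real.exp (-(t * (1 - Real.cos θ)))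

/-- The heat kernel at time `t` of the continuous-time walk on `ℤ` with jump rate one. It is kept
complex-valued so that the contour of integration can be shifted. -/
def latticeHeat (t : ℝ) (k : ℤ) : ℂ :=
  ∫ θ : ℝ, heatSymbol t θ * Complex.exp (Complex.I * k * θ) ∂angleMeasure

lemma heatSymbol_pos (t θ : ℝ) : 0 < heatSymbol t θ := Real.exp_pos _

lemma continuous_heatSymbol (t : ℝ) : Continuous (heatSymbol t) := by
  unfold heatSymbol
  fun_prop

lemma prod_latticeHeat (hd : 0 < d) (t : ℝ) (x : Fin d → ℤ) :
    ∏ i, latticeHeat t (x i) = Complex.exp (-(d * t)) *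
      ∫ θ, Complex.exp ((d * t : ℝ) * stepChar θ) * latticeChar x θ ∂torusMeasure d := by
  simp only [latticeHeat, torusMeasure]
  rw [← integral_fintype_prod_eq_prod
    (f := fun i (θ : ℝ) ↦ (heatSymbol t θ : ℂ) * Complex.exp (Complex.I * x i * θ)),
    ← integral_const_mul]
  congr 1 with θ
  have h_exponent : ∑ i, -(t * (1 - Real.cos (θ i))) = -(d * t) + d * t * stepChar θ := by
    have hd' : (d : ℝ) ≠ 0 := by exact_mod_cast hd.ne'
    rw [stepChar, Finset.sum_neg_distrib, ← Finset.mul_sum, Finset.sum_sub_distrib]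
    simp only [Finset.sum_const, Finset.card_univ, Fintype.card_fin, nsmul_eq_mul, mul_one]
    field_simp
    ring
  rw [Finset.prod_mul_distrib, ← latticeChar, ← Complex.ofReal_prod, ← mul_assoc]
  simp only [heatSymbol]
  rw [← Real.exp_sum, h_exponent, Real.exp_add]
  push_cast
  rfl

lemma hasSum_integral_pow_mul {α : Type*} [MeasurableSpace α] {μ : Measure α} {a : α → ℝ}
    {g : α → ℂ} (ha : AEStronglyMeasurable a μ) (ha_le : ∀ x, |a x| ≤ 1) (hg : Integrable g μ)
    (c : ℝ) :
    HasSum (fun n : ℕ ↦ ((c ^ n / n.factorial : ℝ) : ℂ) * ∫ x, (a x : ℂ) ^ n * g x ∂μ)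
      (∫ x, Complex.exp (c * a x) * g x ∂μ) := by
  simp only [← integral_const_mul]
  have h_bound : Summable fun n : ℕ ↦ |c| ^ n / n.factorial := Real.summable_pow_div_factorial _
  refine hasSum_integral_of_dominated_convergence (fun n x ↦ |c| ^ n / n.factorial * ‖g x‖)
    (fun n ↦ ?_) (fun n ↦ .of_forall fun x ↦ ?_)
    (.of_forall fun x ↦ h_bound.mul_right _) ?_ (.of_forall fun x ↦ ?_)
  · exact (((Complex.continuous_ofReal.comp_aestronglyMeasurable ha).pow n).mul hg.1).const_mul _
  · rw [norm_mul, norm_mul, norm_pow, Complex.norm_real, Complex.norm_real, norm_div, norm_pow,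
      Real.norm_eq_abs, Real.norm_natCast]
    gcongr
    exact mul_le_of_le_one_left (norm_nonneg _) (pow_le_one₀ (abs_nonneg _) (ha_le x))
  · simp only [tsum_mul_right]
    exact hg.norm.const_mul _
  · have h_exp : HasSum (fun n : ℕ ↦ (c * a x : ℂ) ^ n / n.factorial)
        (Complex.exp (c * a x)) := by
      rw [Complex.exp_eq_exp_ℂ]
      exact NormedSpace.expSeries_div_hasSum_exp _
    refine (h_exp.mul_right (g x)).congr_fun fun n ↦ ?_
    push_cast [mul_pow]
    ring

/-- Poissonization: the continuous-time walk makes a Poisson number of steps of parameter `d t`. -/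
lemma hasSum_poisson_srwP (hd : 0 < d) (t : ℝ) (x : Fin d → ℤ) :
    HasSum (fun n : ℕ ↦
        ((Real.exp (-(d * t)) * ((d * t) ^ n / n.factorial) * srwP d n x : ℝ) : ℂ))
      (∏ i, latticeHeat t (x i)) := by
  rw [prod_latticeHeat hd]
  have h_series := (hasSum_integral_pow_mul continuous_stepChar.aestronglyMeasurable
    abs_stepChar_le_one (integrable_latticeChar x) (d * t)).mul_left (Complex.exp (-(d * t)))
  simp only [← srwP_eq_integral hd] at h_series
  refine h_series.congr_fun fun n ↦ ?_
  push_cast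
  ring

lemma norm_prod_latticeHeat (hd : 0 < d) {t : ℝ} (ht : 0 ≤ t) (x : Fin d → ℤ) :
    ENNReal.ofReal ‖∏ i, latticeHeat t (x i)‖ =
      ∑' n : ℕ, ENNReal.ofReal (Real.exp (-(d * t)) * ((d * t) ^ n / n.factorial)) *
        ENNReal.ofReal (srwP d n x) := by
  have h_nonneg (n : ℕ) : 0 ≤ Real.exp (-(d * t)) * ((d * t) ^ n / n.factorial) := by positivity
  have h_terms (n : ℕ) := mul_nonneg (h_nonneg n) (srwP_nonneg d n x)
  obtain ⟨s, hs⟩ := Complex.summable_ofReal.1 (hasSum_poisson_srwP hd t x).summable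
  rw [(hasSum_poisson_srwP hd t x).unique (Complex.hasSum_ofReal.2 hs), Complex.norm_real,
    Real.norm_of_nonneg (hs.nonneg h_terms), ← hs.tsum_eq,
    ENNReal.ofReal_tsum_of_nonneg h_terms hs.summable]
  simp only [ENNReal.ofReal_mul (h_nonneg _)]

lemma lintegral_poisson_weight {r : ℝ} (hr : 0 < r) (n : ℕ) :
    ∫⁻ t in Ioi (0 : ℝ), ENNReal.ofReal (Real.exp (-(r * t)) * ((r * t) ^ n / n.factorial)) =
      ENNReal.ofReal r⁻¹ := by
  have h_gamma : ∀ t ∈ Ici (0 : ℝ),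
      ENNReal.ofReal (Real.exp (-(r * t)) * ((r * t) ^ n / n.factorial)) =
        ENNReal.ofReal r⁻¹ * gammaPDF (n + 1) r t := by
    intro t ht
    rw [gammaPDF_of_nonneg ht, ← ENNReal.ofReal_mul (by positivity), Real.Gamma_nat_eq_factorial,
      add_sub_cancel_right, Real.rpow_natCast, Real.rpow_add_one hr.ne', Real.rpow_natCast]
    congr 1
    rw [mul_pow]
    field_simp
  have h_total : ∫⁻ t in Ici (0 : ℝ), gammaPDF (n + 1) r t = 1 := by
    have h := lintegral_gammaPDF_eq_one (a := n + 1) (r := r) (by positivity) hr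
    rw [← lintegral_add_compl _ measurableSet_Ici, compl_Ici,
      lintegral_gammaPDF_of_nonpos le_rfl, add_zero] at h
    exact h
  rw [setLIntegral_congr Ioi_ae_eq_Ici, setLIntegral_congr_fun measurableSet_Ici h_gamma,
    lintegral_const_mul' _ _ ENNReal.ofReal_ne_top, h_total, mul_one]

lemma lintegral_prod_latticeHeat (hd : 0 < d) (x : Fin d → ℤ) :
    ∫⁻ t in Ioi (0 : ℝ), ENNReal.ofReal ‖∏ i, latticeHeat t (x i)‖ =
      (d : ℝ≥0∞)⁻¹ * ∑' n, ENNReal.ofReal (srwP d n x) := by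
  have hd' : (0 : ℝ) < d := by exact_mod_cast hd
  rw [setLIntegral_congr_fun measurableSet_Ioi fun t ht ↦ norm_prod_latticeHeat hd (le_of_lt ht) x,
    lintegral_tsum fun n ↦ by fun_prop, ← ENNReal.tsum_mul_left]
  congr 1 with n
  rw [lintegral_mul_const' _ _ ENNReal.ofReal_ne_top, lintegral_poisson_weight hd',
    ENNReal.ofReal_inv_of_pos hd', ENNReal.ofReal_natCast]

/-! ### Pointwise bounds on the heat kernels -/

lemma integral_add_mul_I_of_periodic {f : ℂ → ℂ} (hf : Differentiable ℂ f) {T : ℝ}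
    (hT : Function.Periodic f T) (a l : ℝ) :
    ∫ x in a..(a + T), f (x + l * Complex.I) = ∫ x in a..(a + T), f x := by
  have h_rect := Complex.integral_boundary_rect_eq_zero_of_differentiableOn f a
    ((a + T : ℝ) + l * Complex.I) hf.differentiableOn
  have h_sides (y : ℝ) : f ((a + T : ℝ) + y * Complex.I) = f (a + y * Complex.I) := by
    rw [← hT (a + y * Complex.I)]
    congr 1
    push_cast
    ring
  simp only [Complex.ofReal_re, Complex.ofReal_im, Complex.ofReal_zero, zero_mul, add_zero,
    Complex.add_re, Complex.add_im, Complex.re_ofReal_mul, Complex.im_ofReal_mul, Complex.I_re,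
    Complex.I_im, mul_zero, mul_one, zero_add, h_sides, add_sub_cancel_right] at h_rect
  exact (sub_eq_zero.1 h_rect).symm

lemma integrable_heatSymbol {t : ℝ} (ht : 0 ≤ t) : Integrable (heatSymbol t) angleMeasure := by
  refine .of_bound (continuous_heatSymbol t).aestronglyMeasurable 1 (.of_forall fun θ ↦ ?_)
  rw [Real.norm_of_nonneg (heatSymbol_pos t θ).le, heatSymbol, Real.exp_le_one_iff, neg_nonpos]
  exact mul_nonneg ht (sub_nonneg.2 (Real.cos_le_one θ))

lemma latticeHeat_eq_integral_shift (t : ℝ) (k : ℤ) (l : ℝ) :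
    latticeHeat t k = ∫ θ : ℝ, Complex.exp (t * (Complex.cos (θ + l * Complex.I) - 1) +
      Complex.I * k * (θ + l * Complex.I)) ∂angleMeasure := by
  set f : ℂ → ℂ := fun z ↦ Complex.exp (t * (Complex.cos z - 1) + Complex.I * k * z) with hf_def
  have hf : Differentiable ℂ f := by fun_prop
  have h_periodic : Function.Periodic f (2 * π : ℝ) := fun z ↦ by
    refine Complex.exp_eq_exp_iff_exists_int.2 ⟨k, ?_⟩
    push_cast
    rw [Complex.cos_add_two_pi]
    ring
  have h_shift := integral_add_mul_I_of_periodic hf h_periodic (-π) l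
  rw [show -π + 2 * π = π by ring] at h_shift
  rw [integral_angleMeasure, h_shift, ← integral_angleMeasure, latticeHeat]
  congr 1 with θ
  rw [heatSymbol, Complex.ofReal_exp, ← Complex.exp_add, hf_def]
  push_cast
  ring_nf

/-- Shifting the contour to height `l` produces the exponential decay `exp (-(k * l))`. -/
lemma norm_latticeHeat_le_exp_mul {t : ℝ} (ht : 0 ≤ t) (k : ℤ) (l : ℝ) :
    ‖latticeHeat t k‖ ≤
      Real.exp (t * (Real.cosh l - 1) - k * l) * ∫ θ, heatSymbol t θ ∂angleMeasure := by
  rw [latticeHeat_eq_integral_shift t k l, ← integral_const_mul]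
  refine norm_integral_le_of_norm_le ((integrable_heatSymbol ht).const_mul _)
    (.of_forall fun θ ↦ ?_)
  have h_re : (t * (Complex.cos (θ + l * Complex.I) - 1) +
      Complex.I * k * (θ + l * Complex.I)).re =
        t * (Real.cos θ * Real.cosh l - 1) - k * l := by
    rw [Complex.cos_add_mul_I, ← Complex.ofReal_cos, ← Complex.ofReal_sin, ← Complex.ofReal_cosh,
      ← Complex.ofReal_sinh]
    simp only [Complex.add_re, Complex.sub_re, Complex.mul_re, Complex.mul_im, Complex.add_im,
      Complex.sub_im, Complex.ofReal_re, Complex.ofReal_im, Complex.I_re, Complex.I_im,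
      Complex.one_re, Complex.one_im, Complex.intCast_re, Complex.intCast_im]
    ring
  rw [Complex.norm_exp, h_re, heatSymbol, ← Real.exp_add, Real.exp_le_exp]
  nlinarith [mul_nonneg (mul_nonneg ht (sub_nonneg.2 (Real.cos_le_one θ)))
    (sub_nonneg.2 (Real.one_le_cosh l))]

lemma heatSymbol_le_gaussian {t θ : ℝ} (ht : 0 ≤ t) (hθ : θ ∈ Ioc (-π) π) :
    heatSymbol t θ ≤ Real.exp (-(2 / π ^ 2 * t) * θ ^ 2) := by
  rw [heatSymbol, Real.exp_le_exp]
  have h_cos := Real.cos_le_one_sub_mul_cos_sq (abs_le.2 (Ioc_subset_Icc_self hθ))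
  nlinarith

lemma integral_heatSymbol_le {t : ℝ} (ht : 0 ≤ t) :
    ∫ θ, heatSymbol t θ ∂angleMeasure ≤ 8 / √(1 + t) := by
  have hb : 0 < 2 / π ^ 2 * (1 + t) := by positivity
  have h_le : ∀ θ ∈ Ioc (-π) π, heatSymbol t θ ≤
      Real.exp 2 * Real.exp (-(2 / π ^ 2 * (1 + t)) * θ ^ 2) := by
    intro θ hθ
    have h_sq : 2 / π ^ 2 * θ ^ 2 ≤ 2 := by
      have : θ ^ 2 ≤ π ^ 2 := sq_le_sq' hθ.1.le hθ.2
      rw [div_mul_eq_mul_div, div_le_iff₀ (by positivity)]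
      linarith
    refine (heatSymbol_le_gaussian ht hθ).trans ?_
    rw [← Real.exp_add, Real.exp_le_exp]
    linarith
  have h_sqrt : √(π / (2 / π ^ 2 * (1 + t))) ≤ 2 * π / √(1 + t) := by
    rw [Real.sqrt_le_left (by positivity), div_pow, Real.sq_sqrt (by positivity),
      div_le_div_iff₀ (by positivity) (by positivity)]
    have := Real.pi_pos
    have := Real.pi_le_four
    field_simp
    nlinarith
  have h_exp : Real.exp 2 ≤ 8 := by
    rw [show (2 : ℝ) = 1 + 1 by norm_num, Real.exp_add]
    nlinarith [Real.exp_one_lt_d9, Real.exp_pos 1]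
  rw [integral_angleMeasure, intervalIntegral.integral_of_le (by linarith [Real.pi_pos])]
  calc (2 * π)⁻¹ • ∫ θ in Ioc (-π) π, heatSymbol t θ
      ≤ (2 * π)⁻¹ • ∫ θ in Ioc (-π) π, Real.exp 2 * Real.exp (-(2 / π ^ 2 * (1 + t)) * θ ^ 2) := by
        refine smul_le_smul_of_nonneg_left (setIntegral_mono_on
          (continuous_heatSymbol t).integrableOn_Ioc
          (by fun_prop : Continuous _).integrableOn_Ioc measurableSet_Ioc h_le) (by positivity)
    _ ≤ (2 * π)⁻¹ • ∫ θ, Real.exp 2 * Real.exp (-(2 / π ^ 2 * (1 + t)) * θ ^ 2) := by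
        refine smul_le_smul_of_nonneg_left (setIntegral_le_integral
          ((integrable_exp_neg_mul_sq hb).const_mul _) (.of_forall fun θ ↦ by positivity))
          (by positivity)
    _ = (2 * π)⁻¹ * (Real.exp 2 * √(π / (2 / π ^ 2 * (1 + t)))) := by
        rw [integral_const_mul, integral_gaussian, smul_eq_mul]
    _ ≤ (2 * π)⁻¹ * (8 * (2 * π / √(1 + t))) := by gcongr
    _ = 8 / √(1 + t) := by field_simp

lemma mul_cosh_inv_sqrt_sub_one_le {t : ℝ} (ht : 0 ≤ t) :
    t * (Real.cosh (1 / √(1 + t)) - 1) ≤ 1 := by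
  have h_arg : (1 / √(1 + t)) ^ 2 / 2 = 1 / (2 * (1 + t)) := by
    rw [div_pow, Real.sq_sqrt (by positivity)]
    field_simp
  have h_small : |1 / (2 * (1 + t))| ≤ 1 := by
    rw [abs_of_nonneg (by positivity), div_le_one (by positivity)]
    linarith
  have h_cosh : Real.cosh (1 / √(1 + t)) - 1 ≤ 1 / (1 + t) := by
    calc Real.cosh (1 / √(1 + t)) - 1
        ≤ Real.exp (1 / (2 * (1 + t))) - 1 :=
          sub_le_sub_right (h_arg ▸ Real.cosh_le_exp_half_sq _) 1
      _ ≤ 2 * |1 / (2 * (1 + t))| := (le_abs_self _).trans (Real.abs_exp_sub_one_le h_small)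
      _ = 1 / (1 + t) := by
          rw [abs_of_nonneg (by positivity)]
          field_simp
  calc t * (Real.cosh (1 / √(1 + t)) - 1) ≤ t * (1 / (1 + t)) := by gcongr
    _ ≤ 1 := by
        rw [mul_one_div, div_le_one (by positivity)]
        linarith

lemma norm_latticeHeat_le {t : ℝ} (ht : 0 ≤ t) (k : ℤ) :
    ‖latticeHeat t k‖ ≤ 24 / √(1 + t) * Real.exp (-(‖k‖ / √(1 + t))) := by
  have h_cosh := mul_cosh_inv_sqrt_sub_one_le ht
  obtain ⟨l, hl, hkl⟩ : ∃ l, Real.cosh l = Real.cosh (1 / √(1 + t)) ∧ k * l = ‖k‖ / √(1 + t) := by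
    rw [Int.norm_eq_abs]
    rcases abs_choice (k : ℝ) with h | h
    · exact ⟨1 / √(1 + t), rfl, by rw [h, mul_one_div]⟩
    · exact ⟨-(1 / √(1 + t)), Real.cosh_neg _, by rw [h]; ring⟩
  calc ‖latticeHeat t k‖
      ≤ Real.exp (t * (Real.cosh l - 1) - k * l) * ∫ θ, heatSymbol t θ ∂angleMeasure :=
        norm_latticeHeat_le_exp_mul ht k l
    _ ≤ Real.exp (1 - ‖k‖ / √(1 + t)) * (8 / √(1 + t)) := by
        rw [hl, hkl]
        gcongr
        · exact integral_nonneg fun θ ↦ (heatSymbol_pos t θ).le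
        · exact integral_heatSymbol_le ht
    _ = Real.exp 1 * 8 / √(1 + t) * Real.exp (-(‖k‖ / √(1 + t))) := by
        rw [sub_eq_add_neg, Real.exp_add]
        ring
    _ ≤ 24 / √(1 + t) * Real.exp (-(‖k‖ / √(1 + t))) := by
        gcongr
        linarith [Real.exp_one_lt_d9]

lemma gaussianPDFReal_zero_toNNReal {t : ℝ} (ht : 0 ≤ t) (u : ℝ) :
    gaussianPDFReal 0 t.toNNReal u = (√(2 * π * t))⁻¹ * Real.exp (-u ^ 2 / (2 * t)) := by
  rw [gaussianPDFReal, Real.coe_toNNReal t ht, sub_zero]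

lemma gaussianPDFReal_zero_le {t : ℝ} (ht : 0 < t) (u : ℝ) :
    gaussianPDFReal 0 t.toNNReal u ≤ 1 / √t * Real.exp (-(‖u‖ / √t)) := by
  have h_exp : Real.exp (-u ^ 2 / (2 * t)) ≤ 2 * Real.exp (-(‖u‖ / √t)) := by
    have h_sq : -u ^ 2 / (2 * t) = -(‖u‖ / √t) ^ 2 / 2 := by
      rw [div_pow, Real.sq_sqrt ht.le, Real.norm_eq_abs, sq_abs]
      field_simp
    have h_half : Real.exp (1 / 2) ≤ 2 := by
      linarith [Real.exp_bound_div_one_sub_of_interval (x := 1 / 2) (by norm_num) (by norm_num)]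
    calc Real.exp (-u ^ 2 / (2 * t)) ≤ Real.exp (1 / 2 + -(‖u‖ / √t)) := by
          rw [h_sq, Real.exp_le_exp]
          nlinarith [sq_nonneg (‖u‖ / √t - 1)]
      _ ≤ 2 * Real.exp (-(‖u‖ / √t)) := by
          rw [Real.exp_add]
          gcongr
  have h_const : (√(2 * π))⁻¹ * 2 ≤ 1 := by
    rw [inv_mul_le_iff₀ (by positivity), mul_one]
    refine Real.le_sqrt_of_sq_le ?_
    linarith [Real.pi_gt_three]
  calc gaussianPDFReal 0 t.toNNReal u
      = (√(2 * π))⁻¹ * (√t)⁻¹ * Real.exp (-u ^ 2 / (2 * t)) := by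
        rw [gaussianPDFReal_zero_toNNReal ht.le, Real.sqrt_mul (by positivity), mul_inv]
    _ ≤ (√(2 * π))⁻¹ * (√t)⁻¹ * (2 * Real.exp (-(‖u‖ / √t))) := by gcongr
    _ = ((√(2 * π))⁻¹ * 2) * (1 / √t * Real.exp (-(‖u‖ / √t))) := by ring
    _ ≤ 1 / √t * Real.exp (-(‖u‖ / √t)) := mul_le_of_le_one_left (by positivity) h_const

lemma prod_le_pow_mul_exp_neg_norm {ι E : Type*} [Fintype ι] [SeminormedAddCommGroup E]
    {f : ι → ℝ} {a : ι → E} {c s : ℝ} (hc : 0 ≤ c) (hs : 0 < s) (hf_nonneg : ∀ i, 0 ≤ f i)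
    (hf : ∀ i, f i ≤ c / s * Real.exp (-(‖a i‖ / s))) :
    ∏ i, f i ≤ (c / s) ^ Fintype.card ι * Real.exp (-(‖a‖ / s)) := by
  have h_norm : ‖a‖ ≤ ∑ i, ‖a i‖ :=
    (pi_norm_le_iff_of_nonneg (Finset.sum_nonneg fun i _ ↦ norm_nonneg _)).2 fun i ↦
      Finset.single_le_sum (f := fun i ↦ ‖a i‖) (fun j _ ↦ norm_nonneg _) (Finset.mem_univ i)
  calc ∏ i, f i ≤ ∏ i, (c / s * Real.exp (-(‖a i‖ / s))) :=
        Finset.prod_le_prod (fun i _ ↦ hf_nonneg i) fun i _ ↦ hf i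
    _ = (c / s) ^ Fintype.card ι * Real.exp (-((∑ i, ‖a i‖) / s)) := by
        rw [Finset.prod_mul_distrib, Finset.prod_const, ← Real.exp_sum, Finset.sum_neg_distrib,
          Finset.sum_div, Finset.card_univ]
    _ ≤ (c / s) ^ Fintype.card ι * Real.exp (-(‖a‖ / s)) := by gcongr

lemma pow_mul_exp_neg_le {c s r : ℝ} (hc : 0 ≤ c) (hs : 0 < s) (hr : 0 < r) (n : ℕ) :
    (c / s) ^ n * Real.exp (-(r / s)) ≤ c ^ n * n.factorial / r ^ n := by
  have h_exp : Real.exp (-(r / s)) ≤ n.factorial / (r / s) ^ n := by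
    rw [Real.exp_neg, inv_le_comm₀ (Real.exp_pos _) (by positivity), inv_div]
    exact Real.pow_div_factorial_le_exp _ (by positivity) n
  calc (c / s) ^ n * Real.exp (-(r / s)) ≤ (c / s) ^ n * (n.factorial / (r / s) ^ n) := by gcongr
    _ = c ^ n * n.factorial / r ^ n := by
        rw [div_pow, div_pow]
        field_simp

/-- The heat kernel at time `t` of Brownian motion on `ℝ^d`, a product of one-dimensional centred
Gaussian densities of variance `t`. -/
def gaussianKernel (t : ℝ) (a : Fin d → ℝ) : ℝ := ∏ i, gaussianPDFReal 0 t.toNNReal (a i)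

lemma gaussianKernel_nonneg (t : ℝ) (a : Fin d → ℝ) : 0 ≤ gaussianKernel t a :=
  Finset.prod_nonneg fun _ _ ↦ gaussianPDFReal_nonneg _ _ _

lemma gaussianKernel_le_mul_exp {t : ℝ} (ht : 0 < t) (a : Fin d → ℝ) :
    gaussianKernel t a ≤ (1 / √t) ^ d * Real.exp (-(‖a‖ / √t)) := by
  simpa [gaussianKernel] using prod_le_pow_mul_exp_neg_norm zero_le_one (Real.sqrt_pos.2 ht)
    (fun i ↦ gaussianPDFReal_nonneg 0 t.toNNReal (a i)) fun i ↦ gaussianPDFReal_zero_le ht (a i)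

lemma gaussianKernel_le_inv_norm_pow {t : ℝ} (ht : 0 < t) {a : Fin d → ℝ} (ha : a ≠ 0) :
    gaussianKernel t a ≤ d.factorial / ‖a‖ ^ d := by
  simpa using (gaussianKernel_le_mul_exp ht a).trans
    (pow_mul_exp_neg_le zero_le_one (Real.sqrt_pos.2 ht) (norm_pos_iff.2 ha) d)

lemma one_div_sqrt_pow_eq_rpow {t : ℝ} (ht : 0 ≤ t) (n : ℕ) :
    (1 / √t) ^ n = t ^ (-((n : ℝ) / 2)) := by
  rw [one_div, inv_pow, Real.sqrt_eq_rpow, ← Real.rpow_mul_natCast ht, ← Real.rpow_neg ht]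
  ring_nf

lemma gaussianKernel_le_rpow {t : ℝ} (ht : 0 < t) (a : Fin d → ℝ) :
    gaussianKernel t a ≤ t ^ (-((d : ℝ) / 2)) := by
  rw [← one_div_sqrt_pow_eq_rpow ht.le]
  refine (gaussianKernel_le_mul_exp ht a).trans (mul_le_of_le_one_right (by positivity) ?_)
  rw [Real.exp_le_one_iff, neg_nonpos]
  positivity

lemma norm_prod_latticeHeat_le_mul_exp {t : ℝ} (ht : 0 ≤ t) (x : Fin d → ℤ) :
    ‖∏ i, latticeHeat t (x i)‖ ≤ (24 / √(1 + t)) ^ d * Real.exp (-(‖x‖ / √(1 + t))) := by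
  rw [norm_prod]
  simpa using prod_le_pow_mul_exp_neg_norm (by norm_num) (Real.sqrt_pos.2 (by positivity))
    (fun i ↦ norm_nonneg (latticeHeat t (x i))) fun i ↦ norm_latticeHeat_le ht (x i)

lemma norm_prod_latticeHeat_le_inv_norm_pow {t : ℝ} (ht : 0 ≤ t) {x : Fin d → ℤ} (hx : x ≠ 0) :
    ‖∏ i, latticeHeat t (x i)‖ ≤ 24 ^ d * d.factorial / ‖x‖ ^ d :=
  (norm_prod_latticeHeat_le_mul_exp ht x).trans
    (pow_mul_exp_neg_le (by norm_num) (Real.sqrt_pos.2 (by positivity)) (norm_pos_iff.2 hx) d)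

lemma norm_prod_latticeHeat_le_pow {t : ℝ} (ht : 0 ≤ t) (x : Fin d → ℤ) :
    ‖∏ i, latticeHeat t (x i)‖ ≤ (24 / √(1 + t)) ^ d := by
  refine (norm_prod_latticeHeat_le_mul_exp ht x).trans (mul_le_of_le_one_right (by positivity) ?_)
  rw [Real.exp_le_one_iff, neg_nonpos]
  positivity

lemma norm_prod_latticeHeat_le_rpow {t : ℝ} (ht : 0 < t) (x : Fin d → ℤ) :
    ‖∏ i, latticeHeat t (x i)‖ ≤ 24 ^ d * t ^ (-((d : ℝ) / 2)) := by
  rw [← one_div_sqrt_pow_eq_rpow ht.le, ← mul_pow, mul_one_div]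
  refine (norm_prod_latticeHeat_le_pow ht.le x).trans ?_
  gcongr
  linarith

lemma norm_prod_latticeHeat_le_const {t : ℝ} (ht : 0 ≤ t) (x : Fin d → ℤ) :
    ‖∏ i, latticeHeat t (x i)‖ ≤ 24 ^ d := by
  refine (norm_prod_latticeHeat_le_pow ht x).trans ?_
  gcongr
  exact div_le_self (by norm_num) (Real.one_le_sqrt.2 (by linarith))

/-! ### The local central limit theorem -/

/-- The Fourier symbol `heatSymbol t` cut off outside the fundamental domain `(-π, π]`, so that the
lattice heat kernel becomes an integral over the whole line. -/
def truncatedSymbol (t : ℝ) : ℝ → ℝ := (Ioc (-π) π).indicator (heatSymbol t)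

lemma measurable_truncatedSymbol (t : ℝ) : Measurable (truncatedSymbol t) :=
  (continuous_heatSymbol t).measurable.indicator measurableSet_Ioc

lemma truncatedSymbol_nonneg (t θ : ℝ) : 0 ≤ truncatedSymbol t θ :=
  indicator_nonneg (fun θ _ ↦ (heatSymbol_pos t θ).le) θ

lemma truncatedSymbol_le {t : ℝ} (ht : 0 ≤ t) (θ : ℝ) :
    truncatedSymbol t θ ≤ Real.exp (-(2 / π ^ 2 * t) * θ ^ 2) :=
  indicator_le' (fun _ hθ ↦ heatSymbol_le_gaussian ht hθ) (fun _ _ ↦ (Real.exp_pos _).le) θ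

lemma integrable_truncatedSymbol {t : ℝ} (ht : 0 < t) : Integrable (truncatedSymbol t) := by
  refine (integrable_exp_neg_mul_sq (b := 2 / π ^ 2 * t) (by positivity)).mono'
    (measurable_truncatedSymbol t).aestronglyMeasurable (.of_forall fun θ ↦ ?_)
  rw [Real.norm_of_nonneg (truncatedSymbol_nonneg t θ)]
  exact truncatedSymbol_le ht.le θ

lemma latticeHeat_eq_integral_truncatedSymbol (t : ℝ) (k : ℤ) :
    latticeHeat t k =
      (2 * π)⁻¹ • ∫ θ : ℝ, truncatedSymbol t θ * Complex.exp (Complex.I * k * θ) := by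
  rw [latticeHeat, integral_angleMeasure,
    intervalIntegral.integral_of_le (by linarith [Real.pi_pos]),
    ← integral_indicator measurableSet_Ioc]
  congr 2 with θ
  by_cases hθ : θ ∈ Ioc (-π) π <;> simp [truncatedSymbol, hθ]

lemma gaussianPDFReal_eq_integral_exp {t : ℝ} (ht : 0 < t) (u : ℝ) :
    (gaussianPDFReal 0 t.toNNReal u : ℂ) = (2 * π)⁻¹ •
      ∫ θ : ℝ, (Real.exp (-(t / 2) * θ ^ 2) : ℂ) * Complex.exp (Complex.I * u * θ) := by
  have h_fourier := fourierIntegral_gaussian (b := ((t / 2 : ℝ) : ℂ)) (by simpa using ht) u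
  have h_sqrt : √(π / (t / 2)) = 2 * π / √(2 * π * t) := by
    rw [eq_div_iff (by positivity), ← Real.sqrt_mul (by positivity),
      show π / (t / 2) * (2 * π * t) = (2 * π) ^ 2 by field_simp, Real.sqrt_sq (by positivity)]
  have h_exponent : -(u : ℂ) ^ 2 / (4 * ((t / 2 : ℝ) : ℂ)) = ((-u ^ 2 / (2 * t) : ℝ) : ℂ) := by
    push_cast
    field_simp
    norm_num
  rw [← Complex.ofReal_div, show (1 / 2 : ℂ) = ((1 / 2 : ℝ) : ℂ) by push_cast; ring,
    ← Complex.ofReal_cpow (by positivity), ← Real.sqrt_eq_rpow, h_exponent, ← Complex.ofReal_exp,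
    ← Complex.ofReal_mul, h_sqrt] at h_fourier
  simp only [mul_comm (Real.exp _ : ℂ)]
  push_cast at h_fourier ⊢
  rw [h_fourier, gaussianPDFReal_zero_toNNReal ht.le, Complex.real_smul]
  push_cast
  have : ((√(2 * π * t) : ℝ) : ℂ) ≠ 0 := by exact_mod_cast (by positivity : √(2 * π * t) ≠ 0)
  field_simp

/-- The `L¹` distance between the Fourier symbols of the lattice walk and of Brownian motion, both
at time `t` and rescaled by `√t`. -/
def symbolError (t : ℝ) : ℝ :=
  ∫ u : ℝ, |truncatedSymbol t (u / √t) - Real.exp (-(1 / 2) * u ^ 2)|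

lemma symbolError_nonneg (t : ℝ) : 0 ≤ symbolError t := integral_nonneg fun _ ↦ abs_nonneg _

lemma symbolError_div_sqrt {t : ℝ} (ht : 0 < t) :
    symbolError t / √t = ∫ θ : ℝ, |truncatedSymbol t θ - Real.exp (-(t / 2) * θ ^ 2)| := by
  have hs : 0 < √t := Real.sqrt_pos.2 ht
  have h_scale := Measure.integral_comp_div
    (fun θ : ℝ ↦ |truncatedSymbol t θ - Real.exp (-(t / 2) * θ ^ 2)|) (√t)
  rw [abs_of_pos hs, smul_eq_mul] at h_scale
  rw [symbolError, div_eq_iff hs.ne', mul_comm, ← h_scale]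
  congr 1 with u
  rw [div_pow, Real.sq_sqrt ht.le]
  field_simp

lemma norm_latticeHeat_sub_gaussian_le {t : ℝ} (ht : 0 < t) (k : ℤ) :
    ‖latticeHeat t k - gaussianPDFReal 0 t.toNNReal k‖ ≤ symbolError t / √t := by
  have h_gauss : Integrable fun θ : ℝ ↦ Real.exp (-(t / 2) * θ ^ 2) :=
    integrable_exp_neg_mul_sq (by positivity)
  have h_integrable {f : ℝ → ℝ} (hf : Integrable f) :
      Integrable fun θ : ℝ ↦ (f θ : ℂ) * Complex.exp (Complex.I * k * θ) :=
    hf.ofReal.mul_bdd (c := 1) (by fun_prop : Continuous _).aestronglyMeasurable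
      (.of_forall fun θ ↦ (norm_cexp_I_mul k θ).le)
  have h_two_pi : ‖(2 * π)⁻¹‖ ≤ 1 := by
    rw [Real.norm_of_nonneg (by positivity)]
    exact inv_le_one_of_one_le₀ (by linarith [Real.pi_gt_three])
  have h_expansion := gaussianPDFReal_eq_integral_exp ht k
  rw [Complex.ofReal_intCast] at h_expansion
  rw [latticeHeat_eq_integral_truncatedSymbol, h_expansion, ← smul_sub,
    ← integral_sub (h_integrable (integrable_truncatedSymbol ht)) (h_integrable h_gauss),
    norm_smul, symbolError_div_sqrt ht]
  refine (mul_le_of_le_one_left (norm_nonneg _) h_two_pi).trans (norm_integral_le_of_norm_le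
    ((integrable_truncatedSymbol ht).sub h_gauss).abs (.of_forall fun θ ↦ ?_))
  rw [← sub_mul, norm_mul, norm_cexp_I_mul, mul_one, ← Complex.ofReal_sub, Complex.norm_real,
    Real.norm_eq_abs]

lemma eventually_abs_div_sqrt_le_one (u : ℝ) : ∀ᶠ t in atTop, |u / √t| ≤ 1 := by
  filter_upwards [eventually_ge_atTop (u ^ 2), eventually_gt_atTop 0] with t hut ht
  have hs : 0 < √t := Real.sqrt_pos.2 ht
  rw [abs_div, abs_of_pos hs, div_le_one hs]
  exact Real.abs_le_sqrt hut

lemma tendsto_mul_one_sub_cos_div_sqrt (u : ℝ) :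
    Tendsto (fun t : ℝ ↦ t * (1 - Real.cos (u / √t))) atTop (𝓝 (u ^ 2 / 2)) := by
  rw [tendsto_iff_norm_sub_tendsto_zero]
  have h_zero : Tendsto (fun t : ℝ ↦ u ^ 4 * t⁻¹) atTop (𝓝 0) := by
    simpa using tendsto_inv_atTop_zero.const_mul (u ^ 4)
  refine squeeze_zero' (.of_forall fun _ ↦ norm_nonneg _) ?_ h_zero
  filter_upwards [eventually_abs_div_sqrt_le_one u, eventually_gt_atTop 0] with t hu ht
  have h_cos := Real.cos_bound hu
  have h_sq : (u / √t) ^ 2 = u ^ 2 / t := by rw [div_pow, Real.sq_sqrt ht.le]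
  have h_four : |u / √t| ^ 4 = u ^ 4 / t ^ 2 := by
    rw [show 4 = 2 * 2 by norm_num, pow_mul, sq_abs, h_sq, div_pow]
    ring
  rw [h_four, h_sq] at h_cos
  have h_split : t * (1 - Real.cos (u / √t)) - u ^ 2 / 2 =
      -(t * (Real.cos (u / √t) - (1 - u ^ 2 / t / 2))) := by
    field_simp
    ring
  rw [Real.norm_eq_abs, h_split, abs_neg, abs_mul, abs_of_pos ht]
  calc t * |Real.cos (u / √t) - (1 - u ^ 2 / t / 2)| ≤ t * (u ^ 4 / t ^ 2 * (5 / 96)) := by gcongr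
    _ = u ^ 4 * t⁻¹ * (5 / 96) := by field_simp
    _ ≤ u ^ 4 * t⁻¹ := mul_le_of_le_one_right (by positivity) (by norm_num)

lemma tendsto_truncatedSymbol_div_sqrt (u : ℝ) :
    Tendsto (fun t ↦ truncatedSymbol t (u / √t)) atTop (𝓝 (Real.exp (-(1 / 2) * u ^ 2))) := by
  have h_symbol : Tendsto (fun t ↦ heatSymbol t (u / √t)) atTop
      (𝓝 (Real.exp (-(1 / 2) * u ^ 2))) := by
    rw [show -(1 / 2) * u ^ 2 = -(u ^ 2 / 2) by ring]
    exact (Real.continuous_exp.tendsto _).comp (tendsto_mul_one_sub_cos_div_sqrt u).neg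
  refine h_symbol.congr' ?_
  filter_upwards [eventually_abs_div_sqrt_le_one u] with t hu
  rw [abs_le] at hu
  rw [truncatedSymbol, indicator_of_mem]
  constructor <;> linarith [Real.pi_gt_three]

lemma tendsto_symbolError : Tendsto symbolError atTop (𝓝 0) := by
  rw [← integral_zero ℝ ℝ]
  refine tendsto_integral_filter_of_dominated_convergence
    (fun u : ℝ ↦ Real.exp (-(2 / π ^ 2) * u ^ 2) + Real.exp (-(1 / 2) * u ^ 2))
    (.of_forall fun t ↦ ?_) ?_ ?_ (.of_forall fun u ↦ ?_)
  · exact (((measurable_truncatedSymbol t).comp (by fun_prop)).sub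
      (by fun_prop)).abs.aestronglyMeasurable
  · filter_upwards [eventually_gt_atTop 0] with t ht
    refine .of_forall fun u ↦ ?_
    have h_le := truncatedSymbol_le ht.le (u / √t)
    rw [div_pow, Real.sq_sqrt ht.le, show -(2 / π ^ 2 * t) * (u ^ 2 / t) = -(2 / π ^ 2) * u ^ 2 by
      field_simp] at h_le
    rw [Real.norm_eq_abs, abs_abs]
    refine (abs_sub _ _).trans (add_le_add ?_ (abs_of_pos (Real.exp_pos _)).le)
    rwa [abs_of_nonneg (truncatedSymbol_nonneg _ _)]
  · exact (integrable_exp_neg_mul_sq (by positivity)).add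
      (integrable_exp_neg_mul_sq (by norm_num))
  · rw [← abs_zero, ← sub_self (Real.exp (-(1 / 2) * u ^ 2))]
    exact ((tendsto_truncatedSymbol_div_sqrt u).sub_const _).abs

lemma norm_prod_sub_prod_le {ι R : Type*} [NormedCommRing R] [NormOneClass R] (s : Finset ι)
    {a b : ι → R} {M ε : ℝ} (hM : 0 ≤ M) (hε : 0 ≤ ε) (ha : ∀ i, ‖a i‖ ≤ M) (hb : ∀ i, ‖b i‖ ≤ M)
    (hab : ∀ i, ‖a i - b i‖ ≤ M * ε) :
    ‖∏ i ∈ s, a i - ∏ i ∈ s, b i‖ ≤ s.card * M ^ s.card * ε := by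
  classical
  induction s using Finset.induction_on with
  | empty => simp
  | insert i s hi ih =>
    have h_prod : ‖∏ j ∈ s, a j‖ ≤ M ^ s.card :=
      (Finset.norm_prod_le s a).trans
        ((Finset.prod_le_prod (fun j _ ↦ norm_nonneg _) fun j _ ↦ ha j).trans_eq (by simp))
    rw [Finset.prod_insert hi, Finset.prod_insert hi, Finset.card_insert_of_notMem hi]
    calc ‖a i * ∏ j ∈ s, a j - b i * ∏ j ∈ s, b j‖
        = ‖(a i - b i) * ∏ j ∈ s, a j + b i * (∏ j ∈ s, a j - ∏ j ∈ s, b j)‖ := by ring_nf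
      _ ≤ M * ε * M ^ s.card + M * (s.card * M ^ s.card * ε) :=
          (norm_add_le _ _).trans (add_le_add
            ((norm_mul_le _ _).trans (by gcongr; exact hab i))
            ((norm_mul_le _ _).trans (by gcongr; exact hb i)))
      _ = ↑(s.card + 1) * M ^ (s.card + 1) * ε := by
          push_cast
          ring

/-- The canonical embedding of `ℤ^d` into `ℝ^d`. -/
def realVec (x : Fin d → ℤ) : Fin d → ℝ := fun i ↦ x i

lemma norm_realVec (x : Fin d → ℤ) : ‖realVec x‖ = ‖x‖ := by
  have h_coord (i : Fin d) : ‖(x i : ℝ)‖₊ = ‖x i‖₊ := NNReal.eq (Int.norm_cast_real _)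
  simp only [Pi.norm_def, realVec, h_coord]

lemma abs_norm_prod_latticeHeat_sub_gaussianKernel_le {t : ℝ} (ht : 0 < t) (x : Fin d → ℤ) :
    |‖∏ i, latticeHeat t (x i)‖ - gaussianKernel t (realVec x)| ≤
      d * 24 ^ d * symbolError t * t ^ (-((d : ℝ) / 2)) := by
  have h_norm (i : Fin d) : ‖(gaussianPDFReal 0 t.toNNReal (x i) : ℂ)‖ =
      gaussianPDFReal 0 t.toNNReal (x i) := by
    rw [Complex.norm_real, Real.norm_of_nonneg (gaussianPDFReal_nonneg _ _ _)]
  have h_exp (r : ℝ) (hr : 0 ≤ r) : Real.exp (-r) ≤ 1 := by simpa using hr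
  have h_lattice (i : Fin d) : ‖latticeHeat t (x i)‖ ≤ 24 / √t := by
    refine (norm_latticeHeat_le ht.le (x i)).trans
      ((mul_le_of_le_one_right (by positivity) (h_exp _ (by positivity))).trans ?_)
    gcongr
    linarith
  have h_gauss (i : Fin d) : ‖(gaussianPDFReal 0 t.toNNReal (x i) : ℂ)‖ ≤ 24 / √t := by
    rw [h_norm]
    refine (gaussianPDFReal_zero_le ht _).trans
      ((mul_le_of_le_one_right (by positivity) (h_exp _ (by positivity))).trans ?_)
    gcongr
    norm_num
  have h_diff (i : Fin d) :
      ‖latticeHeat t (x i) - gaussianPDFReal 0 t.toNNReal (x i)‖ ≤ 24 / √t * symbolError t := by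
    refine (norm_latticeHeat_sub_gaussian_le ht (x i)).trans ?_
    rw [div_mul_eq_mul_div]
    gcongr
    linarith [symbolError_nonneg t]
  have h_prod := norm_prod_sub_prod_le Finset.univ (by positivity) (symbolError_nonneg t)
    h_lattice h_gauss h_diff
  calc |‖∏ i, latticeHeat t (x i)‖ - gaussianKernel t (realVec x)|
      = |‖∏ i, latticeHeat t (x i)‖ - ‖∏ i, (gaussianPDFReal 0 t.toNNReal (x i) : ℂ)‖| := by
        rw [norm_prod (f := fun i ↦ (gaussianPDFReal 0 t.toNNReal (x i) : ℂ))]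
        simp only [h_norm]
        rfl
    _ ≤ d * (24 / √t) ^ d * symbolError t := by
        simpa using (abs_norm_sub_norm_le _ _).trans h_prod
    _ = d * 24 ^ d * symbolError t * t ^ (-((d : ℝ) / 2)) := by
        rw [← one_div_sqrt_pow_eq_rpow ht.le, div_pow, div_pow]
        ring

/-! ### The Green functions as time integrals -/

lemma integrableOn_Ioi_of_norm_le {f : ℝ → ℝ} {M C p : ℝ} (hp : p < -1) (hf : Measurable f)
    (hM : ∀ t, 0 < t → ‖f t‖ ≤ M) (hC : ∀ t, 0 < t → ‖f t‖ ≤ C * t ^ p) :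
    IntegrableOn f (Ioi 0) := by
  rw [← Ioc_union_Ioi_eq_Ioi (zero_le_one' ℝ)]
  refine IntegrableOn.union ?_ ?_
  · refine Measure.integrableOn_of_bounded (M := M) (by simp)
      hf.aestronglyMeasurable ?_
    filter_upwards [self_mem_ae_restrict measurableSet_Ioc] with t ht using hM t ht.1
  · refine Integrable.mono' ((integrableOn_Ioi_rpow_of_lt hp one_pos).const_mul C)
      hf.aestronglyMeasurable ?_
    filter_upwards [self_mem_ae_restrict measurableSet_Ioi] with t ht
      using hC t (one_pos.trans ht)

lemma abs_integral_Ioi_le {f : ℝ → ℝ} {A M η p : ℝ} (hf : IntegrableOn f (Ioi 0)) (hA : 0 < A)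
    (hp : p < -1) (hM : ∀ t ∈ Ioc 0 A, |f t| ≤ M) (hη : ∀ t ∈ Ioi A, |f t| ≤ η * t ^ p) :
    |∫ t in Ioi 0, f t| ≤ M * A + η * (-A ^ (p + 1) / (p + 1)) := by
  have hsplit : ∫ t in Ioi 0, f t = (∫ t in Ioc 0 A, f t) + ∫ t in Ioi A, f t := by
    rw [← setIntegral_union Ioc_disjoint_Ioi_same measurableSet_Ioi
      (hf.mono_set Ioc_subset_Ioi_self) (hf.mono_set (Ioi_subset_Ioi hA.le)),
      Ioc_union_Ioi_eq_Ioi hA.le]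
  have hsmall : |∫ t in Ioc 0 A, f t| ≤ M * A := by
    simpa [hA.le] using
      norm_setIntegral_le_of_norm_le_const (μ := volume) (f := f) measure_Ioc_lt_top hM
  have hlarge : |∫ t in Ioi A, f t| ≤ η * (-A ^ (p + 1) / (p + 1)) := by
    rw [← integral_Ioi_rpow_of_lt hp hA, ← integral_const_mul]
    refine norm_integral_le_of_norm_le (f := f) ((integrableOn_Ioi_rpow_of_lt hp hA).const_mul η) ?_
    filter_upwards [self_mem_ae_restrict measurableSet_Ioi] with t ht using hη t ht
  rw [hsplit]
  exact (abs_add_le _ _).trans (add_le_add hsmall hlarge)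

lemma measurable_latticeHeat (k : ℤ) : Measurable fun t ↦ latticeHeat t k := by
  unfold latticeHeat
  refine (StronglyMeasurable.integral_prod_right (Continuous.stronglyMeasurable ?_)).measurable
  unfold Function.uncurry heatSymbol
  fun_prop

lemma measurable_norm_prod_latticeHeat (x : Fin d → ℤ) :
    Measurable fun t ↦ ‖∏ i, latticeHeat t (x i)‖ :=
  (Finset.measurable_prod _ fun _ _ ↦ measurable_latticeHeat _).norm

lemma measurable_gaussianKernel :
    Measurable fun q : ℝ × (Fin d → ℝ) ↦ gaussianKernel q.1 q.2 := by
  unfold gaussianKernel gaussianPDFReal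
  fun_prop

lemma neg_half_dim_lt_neg_one (hd : 3 ≤ d) : -((d : ℝ) / 2) < -1 := by
  have : (3 : ℝ) ≤ d := by exact_mod_cast hd
  linarith

lemma integrableOn_norm_prod_latticeHeat (hd : 3 ≤ d) (x : Fin d → ℤ) :
    IntegrableOn (fun t ↦ ‖∏ i, latticeHeat t (x i)‖) (Ioi 0) :=
  integrableOn_Ioi_of_norm_le (neg_half_dim_lt_neg_one hd)
    (measurable_norm_prod_latticeHeat x)
    (fun _ ht ↦ by simpa only [norm_norm] using norm_prod_latticeHeat_le_const ht.le x)
    (fun _ ht ↦ by simpa only [norm_norm] using norm_prod_latticeHeat_le_rpow ht x)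

lemma integrableOn_gaussianKernel (hd : 3 ≤ d) {a : Fin d → ℝ} (ha : a ≠ 0) :
    IntegrableOn (fun t ↦ gaussianKernel t a) (Ioi 0) :=
  integrableOn_Ioi_of_norm_le (M := d.factorial / ‖a‖ ^ d) (C := 1) (neg_half_dim_lt_neg_one hd)
    (measurable_gaussianKernel.comp measurable_prodMk_right)
    (fun _ ht ↦ by
      rw [Real.norm_of_nonneg (gaussianKernel_nonneg _ _)]
      exact gaussianKernel_le_inv_norm_pow ht ha)
    (fun _ ht ↦ by
      rw [Real.norm_of_nonneg (gaussianKernel_nonneg _ _), one_mul]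
      exact gaussianKernel_le_rpow ht a)

lemma tsum_ofReal_srwP (hd : 3 ≤ d) (x : Fin d → ℤ) :
    ∑' n, ENNReal.ofReal (srwP d n x) =
      ENNReal.ofReal (d * ∫ t in Ioi (0 : ℝ), ‖∏ i, latticeHeat t (x i)‖) := by
  have hd0 : 0 < d := by omega
  rw [ENNReal.ofReal_mul d.cast_nonneg, ENNReal.ofReal_natCast,
    ofReal_integral_eq_lintegral_ofReal (integrableOn_norm_prod_latticeHeat hd x)
      (.of_forall fun _ ↦ norm_nonneg _), lintegral_prod_latticeHeat hd0, ← mul_assoc,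
    ENNReal.mul_inv_cancel (by exact_mod_cast hd0.ne') (by simp), one_mul]

lemma summable_srwP (hd : 3 ≤ d) (x : Fin d → ℤ) : Summable fun n ↦ srwP d n x := by
  have h := ENNReal.summable_toReal (tsum_ofReal_srwP hd x ▸ ENNReal.ofReal_ne_top)
  simpa only [ENNReal.toReal_ofReal (srwP_nonneg _ _ _)] using h

lemma greenZ_eq_integral (hd : 3 ≤ d) (x : Fin d → ℤ) :
    greenZ d x = d * ∫ t in Ioi (0 : ℝ), ‖∏ i, latticeHeat t (x i)‖ := by
  have h := tsum_ofReal_srwP hd x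
  rw [← ENNReal.ofReal_tsum_of_nonneg (fun n ↦ srwP_nonneg _ _ _) (summable_srwP hd x)] at h
  exact (ENNReal.ofReal_eq_ofReal_iff (tsum_nonneg fun n ↦ srwP_nonneg _ _ _)
    (mul_nonneg d.cast_nonneg (integral_nonneg fun _ ↦ norm_nonneg _))).1 h

/-- The Euclidean norm on `Fin d → ℝ`, whose own norm is the sup norm. -/
def euclNorm (a : Fin d → ℝ) : ℝ := ‖WithLp.toLp 2 a‖

lemma euclNorm_eq_sqrt (a : Fin d → ℝ) : euclNorm a = √(∑ i, a i ^ 2) := by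
  simp [euclNorm, EuclideanSpace.norm_eq]

lemma euclNorm_nonneg (a : Fin d → ℝ) : 0 ≤ euclNorm a := norm_nonneg _

lemma euclNorm_pos_iff {a : Fin d → ℝ} : 0 < euclNorm a ↔ a ≠ 0 := by
  simp [euclNorm]

lemma euclNorm_sub_comm (a b : Fin d → ℝ) : euclNorm (a - b) = euclNorm (b - a) := by
  simp only [euclNorm, WithLp.toLp_sub, norm_sub_rev]

lemma norm_le_euclNorm (a : Fin d → ℝ) : ‖a‖ ≤ euclNorm a := by
  rw [pi_norm_le_iff_of_nonneg (euclNorm_nonneg a)]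
  exact fun i ↦ PiLp.norm_apply_le (WithLp.toLp 2 a) i

lemma euclNorm_le_sqrt_mul_norm (a : Fin d → ℝ) : euclNorm a ≤ √d * ‖a‖ := by
  rw [euclNorm_eq_sqrt, ← Real.sqrt_sq (norm_nonneg a), ← Real.sqrt_mul d.cast_nonneg]
  refine Real.sqrt_le_sqrt ((Finset.sum_le_card_nsmul _ _ (‖a‖ ^ 2) fun i _ ↦ ?_).trans_eq
    (by simp))
  simpa using pow_le_pow_left₀ (abs_nonneg _) (norm_le_pi_norm a i) 2

/-- The Newtonian kernel `g(a)` of `ℝ^d`, the density of the Brownian Green function; at `a = 0`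
its value is junk. -/
def newtonKernel (a : Fin d → ℝ) : ℝ := greenK d * euclNorm a ^ (2 - (d : ℝ))

lemma greenK_pos (hd : 3 ≤ d) : 0 < greenK d := by
  have hΓ : 0 < Real.Gamma ((d : ℝ) / 2 - 1) :=
    Real.Gamma_pos_of_pos (by linarith [neg_half_dim_lt_neg_one hd])
  unfold greenK
  positivity

lemma newtonKernel_nonneg (hd : 3 ≤ d) (a : Fin d → ℝ) : 0 ≤ newtonKernel a :=
  mul_nonneg (greenK_pos hd).le (Real.rpow_nonneg (euclNorm_nonneg _) _)

lemma newtonKernel_sub_comm (a b : Fin d → ℝ) : newtonKernel (a - b) = newtonKernel (b - a) := by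
  rw [newtonKernel, euclNorm_sub_comm, newtonKernel]

lemma greenE_of_ne {x y : Fin d → ℝ} (h : x ≠ y) :
    greenE d x y = ENNReal.ofReal (newtonKernel (x - y)) := by
  simp [greenE, h, newtonKernel, euclNorm_eq_sqrt]

lemma gaussianKernel_eq {t : ℝ} (ht : 0 < t) (a : Fin d → ℝ) :
    gaussianKernel t a =
      (2 * π * t) ^ (-((d : ℝ) / 2)) * Real.exp (-(euclNorm a ^ 2 / 2 * t⁻¹)) := by
  have hsq : euclNorm a ^ 2 = ∑ i, a i ^ 2 := by
    rw [euclNorm_eq_sqrt, Real.sq_sqrt (Finset.sum_nonneg fun _ _ ↦ sq_nonneg _)]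
  simp only [gaussianKernel, gaussianPDFReal_zero_toNNReal ht.le, Finset.prod_mul_distrib,
    ← Real.exp_sum]
  congr 1
  · rw [← one_div_sqrt_pow_eq_rpow (by positivity)]
    simp
  · rw [hsq, ← Finset.sum_div, Finset.sum_neg_distrib]
    field_simp

/-- The substitution `t = 1 / u` turns the time integral into a Gamma integral. -/
lemma integral_gaussianKernel (hd : 3 ≤ d) {a : Fin d → ℝ} (ha : a ≠ 0) :
    ∫ t in Ioi (0 : ℝ), gaussianKernel t a = newtonKernel a := by
  have hn := euclNorm_pos_iff.2 ha
  have hsubst : ∀ u ∈ Ioi (0 : ℝ),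
      (|(-1 : ℝ)| * u ^ ((-1 : ℝ) - 1)) • gaussianKernel (u ^ (-1 : ℝ)) a =
        (2 * π) ^ (-((d : ℝ) / 2)) *
          (u ^ ((d : ℝ) / 2 - 1 - 1) * Real.exp (-(euclNorm a ^ 2 / 2 * u))) := by
    intro u (hu : 0 < u)
    rw [gaussianKernel_eq (by positivity), Real.rpow_neg_one, inv_inv,
      Real.mul_rpow (by positivity) (by positivity), Real.inv_rpow hu.le, ← Real.rpow_neg hu.le,
      neg_neg, abs_neg, abs_one, one_mul, smul_eq_mul,
      show (d : ℝ) / 2 - 1 - 1 = (-1 - 1) + d / 2 by ring, Real.rpow_add hu]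
    ring
  rw [← integral_comp_rpow_Ioi (fun t ↦ gaussianKernel t a) (p := -1) (by norm_num),
    setIntegral_congr_fun measurableSet_Ioi hsubst, integral_const_mul,
    Real.integral_rpow_mul_exp_neg_mul_Ioi (by linarith [neg_half_dim_lt_neg_one hd])
      (by positivity), newtonKernel, greenK, one_div, inv_div,
    Real.div_rpow (by norm_num) (by positivity), Real.mul_rpow (by norm_num) (by positivity),
    ← Real.rpow_natCast, ← Real.rpow_mul hn.le, Real.rpow_neg (by norm_num),
    Real.rpow_neg (by positivity), Real.rpow_sub (by norm_num : (0 : ℝ) < 2),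
    show 2 - (d : ℝ) = -(((2 : ℕ) : ℝ) * (d / 2 - 1)) by push_cast; ring,
    Real.rpow_neg hn.le, Real.rpow_one]
  field_simp

lemma lintegral_gaussianKernel_zero :
    ∫⁻ t in Ioi (0 : ℝ), ENNReal.ofReal (gaussianKernel t (0 : Fin d → ℝ)) = ⊤ := by
  by_contra hfin
  have hint : IntegrableOn (fun t ↦ gaussianKernel t (0 : Fin d → ℝ)) (Ioi 0) := by
    refine ⟨(measurable_gaussianKernel.comp measurable_prodMk_right).aestronglyMeasurable, ?_⟩
    rw [hasFiniteIntegral_iff_ofReal (.of_forall fun t ↦ gaussianKernel_nonneg _ _)]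
    exact lt_top_iff_ne_top.2 hfin
  refine not_integrableOn_Ioi_rpow (-((d : ℝ) / 2))
    ((hint.const_mul ((2 * π) ^ ((d : ℝ) / 2))).congr ?_)
  filter_upwards [self_mem_ae_restrict measurableSet_Ioi] with t (ht : 0 < t)
  have hpos : 0 < (2 * π) ^ ((d : ℝ) / 2) := by positivity
  rw [gaussianKernel_eq ht, Real.mul_rpow (by positivity) ht.le, Real.rpow_neg (by positivity)]
  simp [euclNorm, hpos.ne']

lemma lintegral_gaussianKernel (hd : 3 ≤ d) (x y : Fin d → ℝ) :
    ∫⁻ t in Ioi (0 : ℝ), ENNReal.ofReal (gaussianKernel t (x - y)) = greenE d x y := by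
  rcases eq_or_ne x y with rfl | h
  · simp [greenE, lintegral_gaussianKernel_zero]
  · have ha : x - y ≠ 0 := sub_ne_zero.2 h
    rw [greenE_of_ne h, ← integral_gaussianKernel hd ha,
      ofReal_integral_eq_lintegral_ofReal (integrableOn_gaussianKernel hd ha)
        (.of_forall fun t ↦ gaussianKernel_nonneg _ _)]

/-- Times up to `a‖x‖²` contribute little because both kernels are small there, later times
because of the local limit theorem. -/
lemma abs_greenZ_sub_newtonKernel_le (hd : 3 ≤ d) {x : Fin d → ℤ} (hx : x ≠ 0) {a η : ℝ}
    (ha : 0 < a) (hη : ∀ t, a * ‖x‖ ^ 2 < t → d * 24 ^ d * symbolError t ≤ η) :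
    |greenZ d x - d * newtonKernel (realVec x)| ≤
      d * ((24 ^ d * d.factorial + d.factorial) * a + η * (a ^ (1 - (d : ℝ) / 2) / (d / 2 - 1))) *
        ‖x‖ ^ (2 - (d : ℝ)) := by
  have hρ : 0 < ‖x‖ := norm_pos_iff.2 hx
  have hx' : realVec x ≠ 0 := norm_pos_iff.1 (by rwa [norm_realVec])
  have hA : 0 < a * ‖x‖ ^ 2 := by positivity
  have hint := integrableOn_norm_prod_latticeHeat hd x
  have hint' := integrableOn_gaussianKernel hd hx'
  have hshort (t : ℝ) (ht : t ∈ Ioc 0 (a * ‖x‖ ^ 2)) :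
      |‖∏ i, latticeHeat t (x i)‖ - gaussianKernel t (realVec x)| ≤
        (24 ^ d * d.factorial + d.factorial) / ‖x‖ ^ d := by
    rw [add_div, mul_div_assoc]
    refine (abs_sub _ _).trans (add_le_add ?_ ?_)
    · simpa only [abs_norm, mul_div_assoc] using norm_prod_latticeHeat_le_inv_norm_pow ht.1.le hx
    · rw [abs_of_nonneg (gaussianKernel_nonneg _ _), ← norm_realVec x]
      exact gaussianKernel_le_inv_norm_pow ht.1 hx'
  have hlong (t : ℝ) (ht : t ∈ Ioi (a * ‖x‖ ^ 2)) :
      |‖∏ i, latticeHeat t (x i)‖ - gaussianKernel t (realVec x)| ≤ η * t ^ (-((d : ℝ) / 2)) := by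
    have ht0 : 0 < t := hA.trans ht
    refine (abs_norm_prod_latticeHeat_sub_gaussianKernel_le ht0 x).trans ?_
    gcongr
    exact hη t ht
  have hmain := abs_integral_Ioi_le (hint.sub hint') hA (neg_half_dim_lt_neg_one hd) hshort hlong
  have hpow : (a * ‖x‖ ^ 2) ^ (-((d : ℝ) / 2) + 1) =
      a ^ (1 - (d : ℝ) / 2) * ‖x‖ ^ (2 - (d : ℝ)) := by
    rw [Real.mul_rpow ha.le (by positivity), ← Real.rpow_natCast, ← Real.rpow_mul hρ.le]
    congr 2 <;> push_cast <;> ring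
  have hpow' : ‖x‖ ^ 2 / ‖x‖ ^ d = ‖x‖ ^ (2 - (d : ℝ)) := by
    rw [Real.rpow_sub hρ, Real.rpow_natCast, Real.rpow_ofNat]
  rw [greenZ_eq_integral hd, ← integral_gaussianKernel hd hx', ← mul_sub,
    ← integral_sub hint hint', abs_mul, Nat.abs_cast, mul_assoc]
  refine mul_le_mul_of_nonneg_left (hmain.trans_eq ?_) d.cast_nonneg
  rw [hpow, ← hpow', show -((d : ℝ) / 2) + 1 = -(d / 2 - 1) by ring, neg_div_neg_eq]
  ring

lemma abs_greenZ_sub_newtonKernel_le_mul_norm (hd : 3 ≤ d) {ε : ℝ} (hε : 0 < ε) :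
    ∃ R : ℝ, 0 < R ∧ ∀ x : Fin d → ℤ, R ≤ ‖x‖ →
      |greenZ d x - d * newtonKernel (realVec x)| ≤ ε * ‖x‖ ^ (2 - (d : ℝ)) := by
  have : (0 : ℝ) < d := by exact_mod_cast (by omega : 0 < d)
  have hd2 : 0 < (d : ℝ) / 2 - 1 := by linarith [neg_half_dim_lt_neg_one hd]
  set C : ℝ := 24 ^ d * d.factorial + d.factorial
  have hC : 0 < C := by positivity
  set a : ℝ := ε / (2 * d * C) with ha
  have ha0 : 0 < a := by positivity
  set B : ℝ := a ^ (1 - (d : ℝ) / 2) / (d / 2 - 1)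
  have hB : 0 < B := by positivity
  set η : ℝ := ε / (2 * d * B) with hη
  have hη0 : 0 < η := by positivity
  have hsmall : ∀ᶠ t in atTop, d * 24 ^ d * symbolError t < η := by
    have h := tendsto_symbolError.const_mul ((d : ℝ) * 24 ^ d)
    rw [mul_zero] at h
    exact h.eventually_lt_const hη0
  obtain ⟨T, hT⟩ := eventually_atTop.1 hsmall
  refine ⟨max 1 √(T / a), by positivity, fun x hx ↦ ?_⟩
  have hx0 : 0 < ‖x‖ := one_pos.trans_le ((le_max_left _ _).trans hx)
  have hTx : T ≤ a * ‖x‖ ^ 2 := by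
    have h := (le_max_right _ _).trans hx
    rwa [Real.sqrt_le_left hx0.le, div_le_iff₀' ha0] at h
  refine (abs_greenZ_sub_newtonKernel_le hd (norm_pos_iff.1 hx0) ha0
    fun t ht ↦ (hT t (hTx.trans ht.le)).le).trans_eq ?_
  congr 1
  change (d : ℝ) * (C * a + η * B) = ε
  rw [ha, hη]
  field_simp
  norm_num

theorem abs_greenZ_sub_newtonKernel_le_mul (hd : 3 ≤ d) {ε : ℝ} (hε : 0 < ε) :
    ∃ R : ℝ, 0 < R ∧ ∀ x : Fin d → ℤ, R ≤ ‖x‖ →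
      |greenZ d x - d * newtonKernel (realVec x)| ≤ ε * (d * newtonKernel (realVec x)) := by
  have hdr : (3 : ℝ) ≤ d := by exact_mod_cast hd
  have hk := greenK_pos hd
  obtain ⟨R, hR, h⟩ := abs_greenZ_sub_newtonKernel_le_mul_norm hd
    (ε := ε * (d * (greenK d * √d ^ (2 - (d : ℝ))))) (by positivity)
  refine ⟨R, hR, fun x hx ↦ (h x hx).trans ?_⟩
  have hx0 : realVec x ≠ 0 := norm_pos_iff.1 (by rw [norm_realVec]; exact hR.trans_le hx)
  have hcomp : √d ^ (2 - (d : ℝ)) * ‖x‖ ^ (2 - (d : ℝ)) ≤ euclNorm (realVec x) ^ (2 - (d : ℝ)) := by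
    rw [← Real.mul_rpow (Real.sqrt_nonneg _) (norm_nonneg _), ← norm_realVec x]
    exact Real.rpow_le_rpow_of_nonpos (euclNorm_pos_iff.2 hx0) (euclNorm_le_sqrt_mul_norm _)
      (by linarith)
  calc ε * (d * (greenK d * √d ^ (2 - (d : ℝ)))) * ‖x‖ ^ (2 - (d : ℝ))
      = ε * (d * (greenK d * (√d ^ (2 - (d : ℝ)) * ‖x‖ ^ (2 - (d : ℝ))))) := by ring
    _ ≤ ε * (d * newtonKernel (realVec x)) := by unfold newtonKernel; gcongr

/-! ### Capacities of lattice sets -/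

lemma srwP_neg (d n : ℕ) (x : Fin d → ℤ) : srwP d n (-x) = srwP d n x := by
  induction n generalizing x with
  | zero => simp [srwP]
  | succ n ih =>
    rw [srwP_succ, srwP_succ]
    congr 1
    refine Finset.sum_congr rfl fun i _ ↦ ?_
    rw [add_comm, ← ih (x + _), ← ih (x - _), neg_add', neg_sub', sub_neg_eq_add]

lemma hasSum_srwP_succ_mul {n : ℕ} {g h : (Fin d → ℤ) → ℝ}
    (hg : ∀ x, HasSum (fun u ↦ srwP d n u * g (x - u)) (h x)) (x : Fin d → ℤ) :
    HasSum (fun u ↦ srwP d (n + 1) u * g (x - u))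
      ((∑ i, (h (x + Pi.single i 1) + h (x - Pi.single i 1))) / (2 * d)) := by
  have hshift (e : Fin d → ℤ) :
      HasSum (fun u ↦ srwP d n (u + e) * g (x - u)) (h (x + e)) := by
    refine ((Equiv.addRight e).hasSum_iff.2 (hg (x + e))).congr_fun fun u ↦ ?_
    simp
  have hsum := (hasSum_sum fun i (_ : i ∈ Finset.univ) ↦
    (hshift (Pi.single i 1)).add (hshift (-Pi.single i 1))).div_const (2 * (d : ℝ))
  simp only [← sub_eq_add_neg] at hsum
  refine hsum.congr_fun fun u ↦ ?_
  rw [srwP_succ, div_mul_eq_mul_div, Finset.sum_mul]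
  simp only [add_mul]

lemma hasSum_srwP_zero_mul (g : (Fin d → ℤ) → ℝ) (x : Fin d → ℤ) :
    HasSum (fun u ↦ srwP d 0 u * g (x - u)) (g x) := by
  convert hasSum_single (f := fun u ↦ srwP d 0 u * g (x - u)) 0 fun u hu ↦ by simp [srwP, hu]
  simp [srwP]

lemma hasSum_srwP (hd : 0 < d) (n : ℕ) : HasSum (srwP d n) 1 := by
  suffices ∀ x : Fin d → ℤ, HasSum (fun u ↦ srwP d n u * Function.const _ 1 (x - u))
      (Function.const _ 1 x) by
    simpa using this 0
  induction n with
  | zero => exact hasSum_srwP_zero_mul _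
  | succ n ih =>
    intro x
    have hd' : (d : ℝ) ≠ 0 := by exact_mod_cast hd.ne'
    have haverage : (∑ _i : Fin d, ((1 : ℝ) + 1)) / (2 * d) = 1 := by
      rw [Finset.sum_const, Finset.card_fin, nsmul_eq_mul]
      field_simp
      norm_num
    simpa only [Function.const_apply, haverage] using hasSum_srwP_succ_mul ih x

/-- The Chapman–Kolmogorov equation. -/
lemma hasSum_srwP_mul_srwP (m n : ℕ) (x : Fin d → ℤ) :
    HasSum (fun u ↦ srwP d m u * srwP d n (x - u)) (srwP d (m + n) x) := by
  induction m generalizing x with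
  | zero => simpa using hasSum_srwP_zero_mul (srwP d n) x
  | succ m ih => simpa [Nat.add_right_comm, srwP_succ] using hasSum_srwP_succ_mul ih x

lemma sum_srwP_sub_mul_srwP_le (m n : ℕ) (F : Finset (Fin d → ℤ)) (a c : Fin d → ℤ) :
    ∑ u ∈ F, srwP d m (u - a) * srwP d n (c - u) ≤ srwP d (m + n) (c - a) := by
  refine sum_le_hasSum (L := .unconditional _) F
    (fun u _ ↦ mul_nonneg (srwP_nonneg _ _ _) (srwP_nonneg _ _ _)) ?_
  simpa [Function.comp_def] using
    (Equiv.subRight a).hasSum_iff.2 (hasSum_srwP_mul_srwP m n (c - a))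

lemma srwP_eq_zero_of_lt_norm {n : ℕ} {x : Fin d → ℤ} (h : n < ‖x‖) : srwP d n x = 0 := by
  induction n generalizing x with
  | zero => exact if_neg (norm_pos_iff.1 (by exact_mod_cast h))
  | succ n ih =>
    have hstep (i : Fin d) : ‖(Pi.single i 1 : Fin d → ℤ)‖ = 1 := by
      rw [Pi.norm_single, norm_one]
    push_cast at h
    rw [srwP_succ, Finset.sum_eq_zero, zero_div]
    intro i _
    have hadd := norm_sub_norm_le x (-Pi.single i 1)
    have hsub := norm_sub_norm_le x (Pi.single i 1)
    rw [norm_neg, sub_neg_eq_add] at hadd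
    rw [ih (by linarith [hstep i]), ih (by linarith [hstep i]), add_zero]

lemma sum_srwP_sub_eq_one (hd : 0 < d) {s : ℕ} {F : Finset (Fin d → ℤ)} {a : Fin d → ℤ}
    (hF : ∀ u, ‖u - a‖ ≤ s → u ∈ F) : ∑ u ∈ F, srwP d s (u - a) = 1 :=
  (hasSum_sum_of_ne_finset_zero fun u hu ↦
    srwP_eq_zero_of_lt_norm (not_le.1 (mt (hF u) hu))).unique
      ((Equiv.subRight a).hasSum_iff.2 (hasSum_srwP hd s))

lemma srwP_le_one (hd : 0 < d) (n : ℕ) (x : Fin d → ℤ) : srwP d n x ≤ 1 :=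
  le_hasSum (hasSum_srwP hd n) x fun _ _ ↦ srwP_nonneg _ _ _

lemma exists_srwP_pos (x : Fin d → ℤ) : ∃ n, 0 < srwP d n x := by
  let H : AddSubgroup (Fin d → ℤ) :=
    { carrier := {x | ∃ n, 0 < srwP d n x}
      zero_mem' := ⟨0, by simp [srwP]⟩
      add_mem' := by
        rintro x y ⟨m, hm⟩ ⟨n, hn⟩
        refine ⟨m + n, (mul_pos hm hn).trans_le ?_⟩
        simpa using le_hasSum (hasSum_srwP_mul_srwP m n (x + y)) x
          fun _ _ ↦ mul_nonneg (srwP_nonneg _ _ _) (srwP_nonneg _ _ _)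
      neg_mem' := by
        rintro x ⟨n, hn⟩
        exact ⟨n, by rwa [srwP_neg]⟩ }
  have hstep (i : Fin d) : Pi.single i 1 ∈ H := by
    have hd : (0 : ℝ) < d := by exact_mod_cast i.pos
    refine ⟨1, div_pos (Finset.sum_pos' (fun j _ ↦ ?_) ⟨i, Finset.mem_univ i, ?_⟩) (by positivity)⟩
    · exact add_nonneg (srwP_nonneg _ _ _) (srwP_nonneg _ _ _)
    · exact add_pos_of_nonneg_of_pos (srwP_nonneg _ _ _) (by simp [srwP])
  have hx : ∑ i, Pi.single i (x i) ∈ H := H.sum_mem fun i _ ↦ by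
    simpa [← Pi.single_smul] using H.zsmul_mem (hstep i) (x i)
  rwa [Finset.univ_sum_single] at hx

lemma greenZ_pos (hd : 3 ≤ d) (x : Fin d → ℤ) : 0 < greenZ d x := by
  obtain ⟨n, hn⟩ := exists_srwP_pos x
  exact (summable_srwP hd x).tsum_pos (fun n ↦ srwP_nonneg _ _ _) n hn

/-- The expected number of visits to `x` from time `2s` on. It is the Green function smoothed by
`s` steps of the walk in each variable. -/
def greenTail (d s : ℕ) (x : Fin d → ℤ) : ℝ := ∑' n : ℕ, srwP d (n + 2 * s) x

lemma greenTail_le_greenZ (hd : 3 ≤ d) (s : ℕ) (x : Fin d → ℤ) : greenTail d s x ≤ greenZ d x := by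
  have h := (summable_srwP hd x).sum_add_tsum_nat_add (2 * s)
  have h0 : 0 ≤ ∑ i ∈ Finset.range (2 * s), srwP d i x :=
    Finset.sum_nonneg fun _ _ ↦ srwP_nonneg _ _ _
  unfold greenTail greenZ
  linarith

lemma tendsto_greenTail (x : Fin d → ℤ) : Tendsto (fun s ↦ greenTail d s x) atTop (𝓝 0) :=
  (tendsto_sum_nat_add fun n ↦ srwP d n x).comp (tendsto_id.const_mul_atTop' two_pos)

lemma sum_greenZ_mul_srwP_le_greenTail (hd : 3 ≤ d) (s : ℕ) (F : Finset (Fin d → ℤ))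
    (a b : Fin d → ℤ) :
    ∑ u ∈ F, ∑ v ∈ F, greenZ d (v - u) * srwP d s (u - a) * srwP d s (v - b) ≤
      greenTail d s (b - a) := by
  have hleft : HasSum
      (fun n ↦ ∑ u ∈ F, ∑ v ∈ F, srwP d n (v - u) * srwP d s (u - a) * srwP d s (v - b))
      (∑ u ∈ F, ∑ v ∈ F, greenZ d (v - u) * srwP d s (u - a) * srwP d s (v - b)) :=
    hasSum_sum fun u _ ↦ hasSum_sum fun v _ ↦
      ((summable_srwP hd (v - u)).hasSum.mul_right _).mul_right _
  have hright : HasSum (fun n ↦ srwP d (n + 2 * s) (b - a)) (greenTail d s (b - a)) :=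
    ((summable_nat_add_iff (2 * s)).2 (summable_srwP hd (b - a))).hasSum
  refine hasSum_le (fun n ↦ ?_) hleft hright
  calc ∑ u ∈ F, ∑ v ∈ F, srwP d n (v - u) * srwP d s (u - a) * srwP d s (v - b)
      = ∑ v ∈ F, (∑ u ∈ F, srwP d s (u - a) * srwP d n (v - u)) * srwP d s (b - v) := by
        rw [Finset.sum_comm]
        refine Finset.sum_congr rfl fun v _ ↦ ?_
        rw [Finset.sum_mul, ← neg_sub v b, srwP_neg]
        exact Finset.sum_congr rfl fun u _ ↦ by ring
    _ ≤ ∑ v ∈ F, srwP d (s + n) (v - a) * srwP d s (b - v) := by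
        gcongr with v
        · exact srwP_nonneg _ _ _
        · exact sum_srwP_sub_mul_srwP_le s n F a v
    _ ≤ srwP d (s + n + s) (b - a) := sum_srwP_sub_mul_srwP_le (s + n) s F a b
    _ = srwP d (n + 2 * s) (b - a) := by congr 1; ring

/-- The `g̃`-energies of the probability weights carried by `F`; `discCap d F` is the inverse of
their infimum. -/
def discEnergies (d : ℕ) (F : Finset (Fin d → ℤ)) : Set ℝ :=
  {e : ℝ | ∃ w : (Fin d → ℤ) → ℝ, (∀ x, 0 ≤ w x) ∧ (∀ x ∉ F, w x = 0) ∧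
      (∑ x ∈ F, w x) = 1 ∧ e = ∑ x ∈ F, ∑ y ∈ F, greenZ d (y - x) * w x * w y}

lemma ofReal_sum_sum_mul {ι : Type*} (F : Finset ι) {G : ι → ι → ℝ} {f g : ι → ℝ}
    (hG : ∀ u v, 0 ≤ G u v) (hf : ∀ u, 0 ≤ f u) (hg : ∀ u, 0 ≤ g u) :
    ENNReal.ofReal (∑ u ∈ F, ∑ v ∈ F, G u v * f u * g v) =
      ∑ u ∈ F, ∑ v ∈ F, ENNReal.ofReal (G u v) * ENNReal.ofReal (f u) * ENNReal.ofReal (g v) := by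
  have h0 (u v : ι) : 0 ≤ G u v * f u * g v := mul_nonneg (mul_nonneg (hG u v) (hf u)) (hg v)
  rw [ENNReal.ofReal_sum_of_nonneg fun u _ ↦ Finset.sum_nonneg fun v _ ↦ h0 u v]
  refine Finset.sum_congr rfl fun u _ ↦ ?_
  rw [ENNReal.ofReal_sum_of_nonneg fun v _ ↦ h0 u v]
  refine Finset.sum_congr rfl fun v _ ↦ ?_
  rw [ENNReal.ofReal_mul (mul_nonneg (hG u v) (hf u)), ENNReal.ofReal_mul (hG u v)]

lemma sum_sum_mul_lintegral {α ι : Type*} [MeasurableSpace α] (μ : Measure α) (F : Finset ι)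
    (c : ι → ι → ℝ≥0∞) {f : ι → α → ℝ≥0∞} (hf : ∀ u, Measurable (f u)) :
    ∑ u ∈ F, ∑ v ∈ F, c u v * (∫⁻ x, f u x ∂μ) * (∫⁻ y, f v y ∂μ) =
      ∫⁻ x, ∫⁻ y, ∑ u ∈ F, ∑ v ∈ F, c u v * f u x * f v y ∂μ ∂μ := by
  have hinner (x : α) : ∫⁻ y, ∑ u ∈ F, ∑ v ∈ F, c u v * f u x * f v y ∂μ =
      ∑ u ∈ F, ∑ v ∈ F, c u v * f u x * ∫⁻ y, f v y ∂μ := by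
    rw [lintegral_finsetSum _ fun u _ ↦ by fun_prop]
    refine Finset.sum_congr rfl fun u _ ↦ ?_
    rw [lintegral_finsetSum _ fun v _ ↦ by fun_prop]
    exact Finset.sum_congr rfl fun v _ ↦ lintegral_const_mul _ (hf v)
  simp only [hinner]
  rw [lintegral_finsetSum _ fun u _ ↦ by fun_prop]
  refine Finset.sum_congr rfl fun u _ ↦ ?_
  rw [lintegral_finsetSum _ fun v _ ↦ by fun_prop]
  refine Finset.sum_congr rfl fun v _ ↦ ?_
  rw [lintegral_mul_const _ (by fun_prop), lintegral_const_mul _ (hf u)]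

lemma bddBelow_discEnergies (hd : 3 ≤ d) (F : Finset (Fin d → ℤ)) :
    BddBelow (discEnergies d F) := by
  refine ⟨0, ?_⟩
  rintro _ ⟨w, hw, -, -, rfl⟩
  exact Finset.sum_nonneg fun x _ ↦ Finset.sum_nonneg fun y _ ↦
    mul_nonneg (mul_nonneg (greenZ_pos hd _).le (hw x)) (hw y)

lemma sInf_discEnergies_le_lintegral (hd : 3 ≤ d) (F : Finset (Fin d → ℤ)) {α : Type*}
    [MeasurableSpace α] (μ : Measure α) [IsProbabilityMeasure μ] {p : (Fin d → ℤ) → α → ℝ}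
    (hpm : ∀ u, Measurable (p u)) (hp0 : ∀ u x, 0 ≤ p u x) (hp1 : ∀ u x, p u x ≤ 1)
    (hpF : ∀ᵐ x ∂μ, ∑ u ∈ F, p u x = 1) :
    ENNReal.ofReal (sInf (discEnergies d F)) ≤
      ∫⁻ x, ∫⁻ y, ENNReal.ofReal (∑ u ∈ F, ∑ v ∈ F, greenZ d (v - u) * p u x * p v y) ∂μ ∂μ := by
  classical
  have hint (u : Fin d → ℤ) : Integrable (p u) μ :=
    .of_bound (hpm u).aestronglyMeasurable 1 (.of_forall fun x ↦ by
      rw [Real.norm_of_nonneg (hp0 u x)]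
      exact hp1 u x)
  have hG (u v : Fin d → ℤ) : 0 ≤ greenZ d (v - u) := (greenZ_pos hd _).le
  set w : (Fin d → ℤ) → ℝ := fun u ↦ if u ∈ F then ∫ x, p u x ∂μ else 0
  have hwF {u : Fin d → ℤ} (hu : u ∈ F) : w u = ∫ x, p u x ∂μ := if_pos hu
  have hw0 (u : Fin d → ℤ) : 0 ≤ w u := by
    unfold w
    split_ifs
    exacts [integral_nonneg (hp0 u), le_rfl]
  have hw1 : ∑ u ∈ F, w u = 1 := by
    rw [Finset.sum_congr rfl fun u hu ↦ hwF hu, ← integral_finsetSum _ fun u _ ↦ hint u,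
      integral_congr_ae hpF]
    simp
  have hmem : ∑ u ∈ F, ∑ v ∈ F, greenZ d (v - u) * w u * w v ∈ discEnergies d F :=
    ⟨w, hw0, fun u hu ↦ if_neg hu, hw1, rfl⟩
  refine (ENNReal.ofReal_le_ofReal (csInf_le (bddBelow_discEnergies hd F) hmem)).trans_eq ?_
  simp only [ofReal_sum_sum_mul F hG hw0 hw0, ofReal_sum_sum_mul F hG (hp0 · _) (hp0 · _)]
  rw [← sum_sum_mul_lintegral μ F _ fun u ↦ (hpm u).ennreal_ofReal]
  refine Finset.sum_congr rfl fun u hu ↦ Finset.sum_congr rfl fun v hv ↦ ?_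
  rw [hwF hu, hwF hv, ofReal_integral_eq_lintegral_ofReal (hint u) (.of_forall (hp0 u)),
    ofReal_integral_eq_lintegral_ofReal (hint v) (.of_forall (hp0 v))]

/-- The mutual Newtonian energy of two measures on `ℝ^d`. -/
def newtonEnergy (μ ν : Measure (Fin d → ℝ)) : ℝ≥0∞ := ∫⁻ x, ∫⁻ y, greenE d x y ∂ν ∂μ

/-- A measure on `A` is pushed to `F` by `ψ` followed by `s` steps of the walk; smoothing turns
`g̃` into `greenTail`, which is small on the diagonal. -/
lemma sInf_discEnergies_le_mul (hd : 3 ≤ d) (s : ℕ) (F : Finset (Fin d → ℤ))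
    {ψ : (Fin d → ℝ) → Fin d → ℤ} (hψ : Measurable ψ) {A : Set (Fin d → ℝ)}
    (hA : ∀ x ∈ A, ∀ u, ‖u - ψ x‖ ≤ s → u ∈ F) {c : ℝ} (hc : 0 < c)
    (hT : ∀ x ∈ A, ∀ y ∈ A, x ≠ y → greenTail d s (ψ y - ψ x) ≤ c * newtonKernel (y - x))
    (μ : Measure (Fin d → ℝ)) [IsProbabilityMeasure μ] (hμ : μ Aᶜ = 0) :
    ENNReal.ofReal (sInf (discEnergies d F)) ≤
      ENNReal.ofReal c * newtonEnergy μ μ := by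
  have hd0 : 0 < d := by omega
  have hae : ∀ᵐ x ∂μ, x ∈ A := hμ
  refine (sInf_discEnergies_le_lintegral hd F μ (p := fun u x ↦ srwP d s (u - ψ x))
    (fun u ↦ (Measurable.of_discrete (f := fun a ↦ srwP d s (u - a))).comp hψ)
    (fun _ _ ↦ srwP_nonneg _ _ _) (fun _ _ ↦ srwP_le_one hd0 _ _)
    (hae.mono fun x hx ↦ sum_srwP_sub_eq_one hd0 (hA x hx))).trans ?_
  simp only [newtonEnergy, ← lintegral_const_mul' _ _ ENNReal.ofReal_ne_top]
  refine lintegral_mono_ae (hae.mono fun x hx ↦ lintegral_mono_ae (hae.mono fun y hy ↦ ?_))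
  rcases eq_or_ne x y with rfl | hxy
  · simp [greenE, ENNReal.mul_top, hc]
  · rw [greenE_of_ne hxy, newtonKernel_sub_comm, ← ENNReal.ofReal_mul hc.le]
    exact ENNReal.ofReal_le_ofReal
      ((sum_greenZ_mul_srwP_le_greenTail hd s F _ _).trans (hT x hx y hy hxy))

/-! ### Discretising measures on well separated boxes -/

lemma realVec_sub (x y : Fin d → ℤ) : realVec (x - y) = realVec x - realVec y := by
  ext i
  simp [realVec]

lemma euclNorm_sub_le (a b : Fin d → ℝ) : euclNorm b - √d * ‖b - a‖ ≤ euclNorm a := by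
  have h : euclNorm b - euclNorm a ≤ euclNorm (b - a) :=
    norm_sub_norm_le (WithLp.toLp 2 b) (WithLp.toLp 2 a)
  linarith [euclNorm_le_sqrt_mul_norm (b - a)]

lemma newtonKernel_le_rpow_mul (hd : 3 ≤ d) {a b : Fin d → ℝ} {κ : ℝ} (hκ : 0 < κ) (hb : b ≠ 0)
    (h : κ * euclNorm b ≤ euclNorm a) :
    newtonKernel a ≤ κ ^ (2 - (d : ℝ)) * newtonKernel b := by
  have hdr : (3 : ℝ) ≤ d := by exact_mod_cast hd
  have hk := greenK_pos hd
  have hb0 := euclNorm_pos_iff.2 hb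
  calc newtonKernel a ≤ greenK d * (κ * euclNorm b) ^ (2 - (d : ℝ)) := by
        unfold newtonKernel
        gcongr ?_ * ?_
        exact Real.rpow_le_rpow_of_nonpos (by positivity) h (by linarith)
    _ = κ ^ (2 - (d : ℝ)) * newtonKernel b := by
        rw [Real.mul_rpow hκ.le hb0.le, newtonKernel]
        ring

lemma exists_greenZ_le_and_newtonKernel_le (hd : 3 ≤ d) {q : ℝ} (hq : 1 < q) :
    ∃ R : ℝ, 0 < R ∧ ∀ x : Fin d → ℤ, R ≤ euclNorm (realVec x) →
      greenZ d x ≤ q * (d * newtonKernel (realVec x)) ∧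
      d * newtonKernel (realVec x) ≤ q * greenZ d x := by
  have hd0 : 0 < √(d : ℝ) := Real.sqrt_pos.2 (by exact_mod_cast (by omega : 0 < d))
  have hq0 : 0 < q := by linarith
  obtain ⟨R, hR, hgreen⟩ := abs_greenZ_sub_newtonKernel_le_mul hd (ε := 1 - q⁻¹)
    (sub_pos.2 (inv_lt_one_of_one_lt₀ hq))
  refine ⟨√d * R, mul_pos hd0 hR, fun x hx ↦ ?_⟩
  have hRx : R ≤ ‖x‖ := by
    rw [← norm_realVec]
    exact le_of_mul_le_mul_left (hx.trans (euclNorm_le_sqrt_mul_norm _)) hd0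
  obtain ⟨hlow, hup⟩ := abs_le.1 (hgreen x hRx)
  set n := d * newtonKernel (realVec x)
  have hn : 0 ≤ n := mul_nonneg d.cast_nonneg (newtonKernel_nonneg hd _)
  have hqinv : 2 - q⁻¹ ≤ q := by
    have := two_mul_le_add_sq 1 q
    field_simp
    linarith
  constructor
  · nlinarith
  · calc n = q * (q⁻¹ * n) := by field_simp
      _ ≤ q * greenZ d x := by gcongr; linarith

lemma exists_rpow_one_sub_mul_le (M p : ℝ) {q : ℝ} (hq : 1 < q) :
    ∃ θ ∈ Ioo (0 : ℝ) 1, 0 < 1 - M * θ ∧ (1 - M * θ) ^ p ≤ q := by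
  have hbase : Tendsto (fun θ ↦ 1 - M * θ) (𝓝[>] 0) (𝓝 1) := by
    refine tendsto_nhdsWithin_of_tendsto_nhds ?_
    simpa using Continuous.tendsto (f := fun θ : ℝ ↦ 1 - M * θ) (by fun_prop) 0
  have hpow : Tendsto (fun θ ↦ (1 - M * θ) ^ p) (𝓝[>] 0) (𝓝 1) := by
    simpa using hbase.rpow_const (p := p) (Or.inl one_ne_zero)
  have hIoo : ∀ᶠ θ in 𝓝[>] (0 : ℝ), θ ∈ Ioo 0 1 := Ioo_mem_nhdsGT one_pos
  exact (hIoo.and ((hbase.eventually_const_lt one_pos).and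
    (hpow.eventually_le_const hq))).exists

/-- The lower corners in `𝒞` are so far apart that the boxes of side `L` at distinct corners leave
a gap of at least `γ L` in the sup norm. -/
def WellSeparated (γ : ℝ) (L : ℕ) (𝒞 : Finset (Fin d → ℤ)) : Prop :=
  (𝒞 : Set (Fin d → ℤ)).Pairwise fun z z' ↦ (1 + γ) * L ≤ ‖z - z'‖

/-- The similarity of ratio `1 - θ` that sends the lower corner `z` of a box to `z + (m, …, m)`. It
leaves room for moving its image inside the box. -/
def boxContraction (θ m : ℝ) (z : Fin d → ℤ) (x : Fin d → ℝ) : Fin d → ℝ :=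
  fun i ↦ z i + m + (1 - θ) * (x i - z i)

lemma boxContraction_mem_Icc {L : ℕ} {θ : ℝ} (hθ : θ < 1) (m : ℝ) {z : Fin d → ℤ}
    {x : Fin d → ℝ} (hx : x ∈ boxR d L z) (i : Fin d) :
    boxContraction θ m z x i ∈ Icc (z i + m) (z i + m + (1 - θ) * L) := by
  have hlow : (z i : ℝ) ≤ x i := hx.1 i
  have hup : x i ≤ z i + L := hx.2 i
  unfold boxContraction
  constructor <;> nlinarith

lemma boxContraction_sub_boxContraction (θ m : ℝ) (z z' : Fin d → ℤ) (x y : Fin d → ℝ) :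
    boxContraction θ m z x - boxContraction θ m z' y =
      (x - y) - θ • ((x - realVec z) - (y - realVec z')) := by
  ext i
  simp only [boxContraction, realVec, Pi.sub_apply, Pi.smul_apply, smul_eq_mul]
  ring

section Separated

variable {L : ℕ} {γ : ℝ} {𝒞 : Finset (Fin d → ℤ)} {z z' : Fin d → ℤ} {x y : Fin d → ℝ}

lemma norm_sub_corner_sub_le (hx : x ∈ boxR d L z) (hy : y ∈ boxR d L z') :
    ‖(x - realVec z) - (y - realVec z')‖ ≤ L := by
  refine (pi_norm_le_iff_of_nonneg L.cast_nonneg).2 fun i ↦ ?_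
  have hx1 : (z i : ℝ) ≤ x i := hx.1 i
  have hx2 : x i ≤ z i + L := hx.2 i
  have hy1 : (z' i : ℝ) ≤ y i := hy.1 i
  have hy2 : y i ≤ z' i + L := hy.2 i
  simp only [Pi.sub_apply, realVec]
  exact abs_le.2 ⟨by linarith, by linarith⟩

lemma WellSeparated.mul_le_norm_sub (hsep : WellSeparated γ L 𝒞) (hz : z ∈ 𝒞) (hz' : z' ∈ 𝒞)
    (hne : z ≠ z') (hx : x ∈ boxR d L z) (hy : y ∈ boxR d L z') : γ * L ≤ ‖x - y‖ := by
  have hcorner : (1 + γ) * L ≤ ‖realVec z - realVec z'‖ := by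
    rw [← realVec_sub, norm_realVec]
    exact hsep hz hz' hne
  have htriangle : ‖realVec z - realVec z'‖ ≤
      ‖x - y‖ + ‖(x - realVec z) - (y - realVec z')‖ :=
    (congrArg norm (by abel)).trans_le (norm_sub_le _ _)
  linarith [norm_sub_corner_sub_le hx hy]

lemma WellSeparated.eq_of_norm_sub_lt (hsep : WellSeparated γ L 𝒞) (hz : z ∈ 𝒞) (hz' : z' ∈ 𝒞)
    (hx : x ∈ boxR d L z) (hy : y ∈ boxR d L z') (hxy : ‖x - y‖ < γ * L) : z = z' := by
  by_contra hne
  exact hxy.not_ge (hsep.mul_le_norm_sub hz hz' hne hx hy)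

lemma WellSeparated.norm_sub_corner_sub_le_mul (hγ : 0 < γ) (hsep : WellSeparated γ L 𝒞)
    (hz : z ∈ 𝒞) (hz' : z' ∈ 𝒞) (hx : x ∈ boxR d L z) (hy : y ∈ boxR d L z') :
    ‖(x - realVec z) - (y - realVec z')‖ ≤ (1 + γ⁻¹) * ‖x - y‖ := by
  rcases eq_or_ne z z' with rfl | hne
  · rw [sub_sub_sub_cancel_right]
    exact le_mul_of_one_le_left (norm_nonneg _) (by simp [hγ.le])
  · have hL : (L : ℝ) ≤ γ⁻¹ * ‖x - y‖ :=
      (le_inv_mul_iff₀ hγ).2 (hsep.mul_le_norm_sub hz hz' hne hx hy)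
    linarith [norm_sub_corner_sub_le hx hy, norm_nonneg (x - y)]

lemma WellSeparated.mul_euclNorm_le_boxContraction (hγ : 0 < γ) (hsep : WellSeparated γ L 𝒞)
    {θ : ℝ} (hθ : 0 < θ) (m : ℝ) (hz : z ∈ 𝒞) (hz' : z' ∈ 𝒞) (hx : x ∈ boxR d L z)
    (hy : y ∈ boxR d L z') :
    (1 - √d * (1 + γ⁻¹) * θ) * euclNorm (x - y) ≤
      euclNorm (boxContraction θ m z x - boxContraction θ m z' y) := by
  have hshift : ‖(x - y) - (boxContraction θ m z x - boxContraction θ m z' y)‖ ≤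
      θ * ((1 + γ⁻¹) * euclNorm (x - y)) := by
    rw [boxContraction_sub_boxContraction, sub_sub_cancel, norm_smul, Real.norm_of_nonneg hθ.le]
    have hcorner := hsep.norm_sub_corner_sub_le_mul hγ hz hz' hx hy
    gcongr
    exact hcorner.trans (by gcongr; exact norm_le_euclNorm _)
  calc (1 - √d * (1 + γ⁻¹) * θ) * euclNorm (x - y)
      = euclNorm (x - y) - √d * (θ * ((1 + γ⁻¹) * euclNorm (x - y))) := by ring
    _ ≤ euclNorm (x - y) -
          √d * ‖(x - y) - (boxContraction θ m z x - boxContraction θ m z' y)‖ := by gcongr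
    _ ≤ _ := euclNorm_sub_le _ _

/-- The lattice point below the image of `x` under the contraction of the box with corner `z`. -/
def boxDiscretization (θ : ℝ) (s : ℕ) (z : Fin d → ℤ) (x : Fin d → ℝ) : Fin d → ℤ :=
  fun i ↦ ⌊boxContraction θ s z x i⌋

lemma measurable_boxDiscretization (θ : ℝ) (s : ℕ) (z : Fin d → ℤ) :
    Measurable (boxDiscretization θ s z) := by
  unfold boxDiscretization boxContraction
  exact measurable_pi_lambda _ fun i ↦ Measurable.floor (by fun_prop)

lemma mem_boxZ_of_norm_sub_boxDiscretization_le {θ : ℝ} (hθ : θ < 1) {s : ℕ}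
    (hs : 2 * (s : ℝ) + 1 ≤ θ * L) (hx : x ∈ boxR d L z) {u : Fin d → ℤ}
    (hu : ‖u - boxDiscretization θ s z x‖ ≤ s) : u ∈ boxZ d L z := by
  have hcoord (i : Fin d) : z i ≤ u i ∧ u i ≤ z i + L - 1 := by
    obtain ⟨hlow, hup⟩ := boxContraction_mem_Icc hθ s hx i
    have hfloor_low : z i + s ≤ ⌊boxContraction θ s z x i⌋ := Int.le_floor.2 (by simpa using hlow)
    have hfloor_up : ⌊boxContraction θ s z x i⌋ + s + 1 ≤ z i + L := by
      have := Int.floor_le (boxContraction θ s z x i)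
      exact_mod_cast (by linarith : (⌊boxContraction θ s z x i⌋ + s + 1 : ℝ) ≤ z i + L)
    have hui : |u i - ⌊boxContraction θ s z x i⌋| ≤ s := by
      exact_mod_cast (Int.norm_eq_abs _).symm.trans_le ((norm_le_pi_norm _ i).trans hu)
    have := abs_le.1 hui
    constructor <;> linarith
  exact Finset.mem_Icc.2 ⟨fun i ↦ (hcoord i).1, fun i ↦ (hcoord i).2⟩

lemma norm_realVec_boxDiscretization_sub_le (θ : ℝ) (s : ℕ) (z z' : Fin d → ℤ)
    (x y : Fin d → ℝ) :
    ‖(boxContraction θ s z x - boxContraction θ s z' y) -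
      realVec (boxDiscretization θ s z x - boxDiscretization θ s z' y)‖ ≤ 1 := by
  refine (pi_norm_le_iff_of_nonneg zero_le_one).2 fun i ↦ ?_
  have hfract : (boxContraction θ s z x - boxContraction θ s z' y -
      realVec (boxDiscretization θ s z x - boxDiscretization θ s z' y)) i =
      Int.fract (boxContraction θ s z x i) - Int.fract (boxContraction θ s z' y i) := by
    simp only [realVec, boxDiscretization, Int.fract, Pi.sub_apply, Int.cast_sub]
    ring
  rw [hfract, Real.norm_eq_abs, abs_le]
  constructor <;>
    linarith [Int.fract_nonneg (boxContraction θ s z x i),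
      Int.fract_lt_one (boxContraction θ s z x i),
      Int.fract_nonneg (boxContraction θ s z' y i),
      Int.fract_lt_one (boxContraction θ s z' y i)]

lemma WellSeparated.mul_euclNorm_le_boxDiscretization (hγ : 0 < γ) (hsep : WellSeparated γ L 𝒞)
    {θ : ℝ} (hθ : 0 < θ) (s : ℕ) (hz : z ∈ 𝒞) (hz' : z' ∈ 𝒞) (hx : x ∈ boxR d L z)
    (hy : y ∈ boxR d L z') (hxy : 1 ≤ θ * euclNorm (x - y)) :
    (1 - √d * (2 + γ⁻¹) * θ) * euclNorm (x - y) ≤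
      euclNorm (realVec (boxDiscretization θ s z x - boxDiscretization θ s z' y)) := by
  have hfloor := norm_realVec_boxDiscretization_sub_le θ s z z' x y
  calc (1 - √d * (2 + γ⁻¹) * θ) * euclNorm (x - y)
      = (1 - √d * (1 + γ⁻¹) * θ) * euclNorm (x - y) - √d * (θ * euclNorm (x - y)) := by ring
    _ ≤ euclNorm (boxContraction θ s z x - boxContraction θ s z' y) - √d * 1 := by
        gcongr
        exact hsep.mul_euclNorm_le_boxContraction hγ hθ s hz hz' hx hy
    _ ≤ euclNorm (boxContraction θ s z x - boxContraction θ s z' y) -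
          √d * ‖(boxContraction θ s z x - boxContraction θ s z' y) -
            realVec (boxDiscretization θ s z x - boxDiscretization θ s z' y)‖ := by gcongr
    _ ≤ _ := euclNorm_sub_le _ _

lemma norm_boxDiscretization_sub_le {θ : ℝ} (hθ : θ ∈ Ioo (0 : ℝ) 1) (s : ℕ) (z : Fin d → ℤ)
    (x y : Fin d → ℝ) :
    ‖boxDiscretization θ s z x - boxDiscretization θ s z y‖ ≤ ‖x - y‖ + 1 := by
  have hcontract : boxContraction θ s z x - boxContraction θ s z y = (1 - θ) • (x - y) := by
    rw [boxContraction_sub_boxContraction]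
    module
  have hnorm : ‖(1 - θ) • (x - y)‖ ≤ ‖x - y‖ := by
    rw [norm_smul, Real.norm_of_nonneg (sub_nonneg.2 hθ.2.le)]
    exact mul_le_of_le_one_left (norm_nonneg _) (by linarith [hθ.1])
  have hfloor := norm_realVec_boxDiscretization_sub_le θ s z z x y
  rw [← norm_realVec]
  rw [hcontract] at hfloor
  linarith [norm_le_norm_add_norm_sub ((1 - θ) • (x - y))
    (realVec (boxDiscretization θ s z x - boxDiscretization θ s z y))]

lemma WellSeparated.exists_measurable_eq_boxDiscretization (hγL : 0 < γ * L)
    (hsep : WellSeparated γ L 𝒞) (θ : ℝ) (s : ℕ) :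
    ∃ ψ : (Fin d → ℝ) → Fin d → ℤ, Measurable ψ ∧
      ∀ z ∈ 𝒞, ∀ x ∈ boxR d L z, ψ x = boxDiscretization θ s z x := by
  rcases 𝒞.eq_empty_or_nonempty with rfl | h𝒞
  · exact ⟨0, measurable_zero, by simp⟩
  have : Nonempty 𝒞 := h𝒞.to_subtype
  have hdisjoint : Pairwise fun z z' : 𝒞 ↦ EqOn (boxDiscretization θ s z.1)
      (boxDiscretization θ s z'.1) (boxR d L z.1 ∩ boxR d L z'.1) := by
    rintro z z' hne x ⟨hx, hx'⟩
    have hxx : ‖x - x‖ < γ * L := by simpa using hγL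
    exact absurd (Subtype.ext (hsep.eq_of_norm_sub_lt z.2 z'.2 hx hx' hxx)) hne
  obtain ⟨ψ, hψ, heq⟩ := exists_measurable_piecewise _ (fun z : 𝒞 ↦ measurableSet_Icc) _
    (fun z ↦ measurable_boxDiscretization θ s z.1) hdisjoint
  exact ⟨ψ, hψ, fun z hz ↦ heq ⟨z, hz⟩⟩

end Separated

lemma rpow_le_newtonKernel (hd : 3 ≤ d) {a : Fin d → ℝ} (ha : a ≠ 0) {R : ℝ}
    (haR : euclNorm a ≤ R) : greenK d * R ^ (2 - (d : ℝ)) ≤ newtonKernel a := by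
  have hdr : (3 : ℝ) ≤ d := by exact_mod_cast hd
  have hk := greenK_pos hd
  unfold newtonKernel
  gcongr ?_ * ?_
  exact Real.rpow_le_rpow_of_nonpos (euclNorm_pos_iff.2 ha) haR (by linarith)

lemma exists_greenTail_le (N : ℝ) {c : ℝ} (hc : 0 < c) :
    ∃ s, ∀ x : Fin d → ℤ, ‖x‖ ≤ N → greenTail d s x ≤ c := by
  have hfin : (Metric.closedBall (0 : Fin d → ℤ) N).Finite :=
    (isCompact_closedBall _ _).finite_of_discrete
  obtain ⟨s, hs⟩ := ((eventually_all_finite hfin).2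
    fun x _ ↦ (tendsto_greenTail x).eventually_le_const hc).exists
  exact ⟨s, fun x hx ↦ hs x (mem_closedBall_zero_iff.2 hx)⟩

/-- Pairs at a large distance are handled by the asymptotics of `g̃`; the finitely many lattice
displacements left are handled by smoothing with `s` steps of the walk. -/
lemma exists_greenTail_boxDiscretization_le (hd : 3 ≤ d) {γ q : ℝ} (hγ : 0 < γ) (hq : 1 < q) :
    ∃ θ ∈ Ioo (0 : ℝ) 1, ∃ R > 0, ∃ s, ∀ (L : ℕ) (𝒞 : Finset (Fin d → ℤ)), R ≤ γ * L →
      WellSeparated γ L 𝒞 → ∀ z ∈ 𝒞, ∀ z' ∈ 𝒞, ∀ x ∈ boxR d L z, ∀ y ∈ boxR d L z', x ≠ y →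
      greenTail d s (boxDiscretization θ s z' y - boxDiscretization θ s z x) ≤
        q * q * d * newtonKernel (y - x) := by
  have : (0 : ℝ) < d := by exact_mod_cast (by omega : 0 < d)
  have hk := greenK_pos hd
  obtain ⟨R₀, hR₀, hgreen⟩ := exists_greenZ_le_and_newtonKernel_le hd hq
  obtain ⟨θ, hθ, hκ, hκq⟩ := exists_rpow_one_sub_mul_le (√d * (2 + γ⁻¹)) (2 - (d : ℝ)) hq
  set κ := 1 - √d * (2 + γ⁻¹) * θ
  set R := max (1 / θ) (R₀ / κ)
  have hR : 0 < R := lt_max_of_lt_right (by positivity)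
  obtain ⟨s, hs⟩ := exists_greenTail_le (d := d) (R + 1)
    (show 0 < q * q * d * (greenK d * R ^ (2 - (d : ℝ))) by positivity)
  refine ⟨θ, hθ, R, hR, s, fun L 𝒞 hL hsep z hz z' hz' x hx y hy hxy ↦ ?_⟩
  have hyx : y - x ≠ 0 := sub_ne_zero.2 hxy.symm
  set b := boxDiscretization θ s z' y - boxDiscretization θ s z x
  rcases le_or_gt R (euclNorm (y - x)) with hfar | hnear
  · have hθxy : 1 ≤ θ * euclNorm (y - x) :=
      (div_le_iff₀' hθ.1).1 ((le_max_left _ _).trans hfar)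
    have hκxy : R₀ ≤ κ * euclNorm (y - x) :=
      (div_le_iff₀' hκ).1 ((le_max_right _ _).trans hfar)
    have hdist := hsep.mul_euclNorm_le_boxDiscretization hγ hθ.1 s hz' hz hy hx hθxy
    calc greenTail d s b ≤ greenZ d b := greenTail_le_greenZ hd s b
      _ ≤ q * (d * newtonKernel (realVec b)) := (hgreen b (hκxy.trans hdist)).1
      _ ≤ q * (d * (κ ^ (2 - (d : ℝ)) * newtonKernel (y - x))) := by
          gcongr
          exact newtonKernel_le_rpow_mul hd hκ hyx hdist
      _ ≤ q * (d * (q * newtonKernel (y - x))) := by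
          gcongr
          exact newtonKernel_nonneg hd _
      _ = q * q * d * newtonKernel (y - x) := by ring
  · have hnorm : ‖y - x‖ < R := (norm_le_euclNorm _).trans_lt hnear
    obtain rfl : z' = z := hsep.eq_of_norm_sub_lt hz' hz hy hx (hnorm.trans_le hL)
    have hb : ‖b‖ ≤ R + 1 := (norm_boxDiscretization_sub_le hθ s z' y x).trans (by linarith)
    calc greenTail d s b ≤ q * q * d * (greenK d * R ^ (2 - (d : ℝ))) := hs b hb
      _ ≤ q * q * d * newtonKernel (y - x) := by
          gcongr
          exact rpow_le_newtonKernel hd hyx hnear.le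

theorem exists_sInf_discEnergies_le (hd : 3 ≤ d) {γ ε : ℝ} (hγ : 0 < γ) (hε : 0 < ε) :
    ∃ L₁ : ℕ, ∀ L ≥ L₁, ∀ 𝒞 : Finset (Fin d → ℤ), WellSeparated γ L 𝒞 →
      ∀ (μ : Measure (Fin d → ℝ)) [IsProbabilityMeasure μ], μ (⋃ z ∈ 𝒞, boxR d L z)ᶜ = 0 →
      ENNReal.ofReal (sInf (discEnergies d (𝒞.biUnion (boxZ d L)))) ≤
        ENNReal.ofReal ((1 + ε) * d) * newtonEnergy μ μ := by
  have : (0 : ℝ) < d := by exact_mod_cast (by omega : 0 < d)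
  have hq : 1 < √(1 + ε) := Real.lt_sqrt_of_sq_lt (by linarith)
  have hqq : √(1 + ε) * √(1 + ε) = 1 + ε := Real.mul_self_sqrt (by linarith)
  obtain ⟨θ, hθ, R, hR, s, hT⟩ := exists_greenTail_boxDiscretization_le hd hγ hq
  refine ⟨⌈(2 * s + 1) / θ⌉₊ + ⌈R / γ⌉₊, fun L hL 𝒞 hsep μ _ hμ ↦ ?_⟩
  have hLs : 2 * (s : ℝ) + 1 ≤ θ * L :=
    (div_le_iff₀' hθ.1).1 (Nat.ceil_le.1 ((Nat.le_add_right _ _).trans hL))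
  have hLR : R ≤ γ * L := (div_le_iff₀' hγ).1 (Nat.ceil_le.1 ((Nat.le_add_left _ _).trans hL))
  obtain ⟨ψ, hψ, hψ_eq⟩ :=
    hsep.exists_measurable_eq_boxDiscretization (hR.trans_le hLR) θ s
  have hbox {x : Fin d → ℝ} (hx : x ∈ ⋃ z ∈ 𝒞, boxR d L z) : ∃ z ∈ 𝒞, x ∈ boxR d L z := by
    simpa using hx
  refine sInf_discEnergies_le_mul hd s _ hψ (fun x hx u hu ↦ ?_) (by positivity)
    (fun x hx y hy hxy ↦ ?_) μ hμ
  · obtain ⟨z, hz, hxz⟩ := hbox hx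
    rw [hψ_eq z hz x hxz] at hu
    exact Finset.mem_biUnion.2 ⟨z, hz, mem_boxZ_of_norm_sub_boxDiscretization_le hθ.2 hLs hxz hu⟩
  · obtain ⟨z, hz, hxz⟩ := hbox hx
    obtain ⟨z', hz', hyz⟩ := hbox hy
    rw [hψ_eq z hz x hxz, hψ_eq z' hz' y hyz, ← hqq]
    exact hT L 𝒞 hLR hsep z hz z' hz' x hxz y hyz hxy

/-! ### Smoothing by a truncated Gaussian -/

lemma gaussianPDFReal_mul_gaussianPDFReal_add {v t : ℝ≥0} (hv : v ≠ 0) (ht : t ≠ 0) (c u : ℝ) :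
    gaussianPDFReal 0 v u * gaussianPDFReal 0 t (c + u) =
      gaussianPDFReal 0 (t + v) c *
        gaussianPDFReal (-(c * v / (t + v))) (t * v / (t + v)) u := by
  have : (0 : ℝ) < v := NNReal.coe_pos.2 hv.bot_lt
  have : (0 : ℝ) < t := NNReal.coe_pos.2 ht.bot_lt
  simp only [gaussianPDFReal]
  push_cast
  rw [mul_mul_mul_comm, mul_mul_mul_comm (√(2 * π * (t + v)))⁻¹, ← Real.exp_add, ← Real.exp_add,
    ← mul_inv, ← mul_inv, ← Real.sqrt_mul (by positivity), ← Real.sqrt_mul (by positivity)]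
  congr 1
  · congr 2
    field_simp
  · congr 1
    field_simp
    ring

lemma integral_gaussianPDFReal_add {v t : ℝ≥0} (hv : v ≠ 0) (ht : t ≠ 0) (c : ℝ) :
    ∫ u, gaussianPDFReal 0 t (c + u) ∂gaussianReal 0 v = gaussianPDFReal 0 (t + v) c := by
  have hvt : t * v / (t + v) ≠ 0 :=
    div_ne_zero (mul_ne_zero ht hv) (add_pos ht.bot_lt hv.bot_lt).ne'
  simp only [integral_gaussianReal_eq_integral_smul hv, smul_eq_mul,
    gaussianPDFReal_mul_gaussianPDFReal_add hv ht, integral_const_mul,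
    integral_gaussianPDFReal_eq_one _ hvt, mul_one]

/-- The centred Gaussian measure on `ℝ^d` with covariance `v • 1`. -/
abbrev isotropicGaussian (d : ℕ) (v : ℝ≥0) : Measure (Fin d → ℝ) :=
  Measure.pi fun _ ↦ gaussianReal 0 v

lemma lintegral_gaussianKernel_add {v : ℝ≥0} (hv : v ≠ 0) {t : ℝ} (ht : 0 < t) (c : Fin d → ℝ) :
    ∫⁻ u, ENNReal.ofReal (gaussianKernel t (c + u)) ∂isotropicGaussian d v =
      ENNReal.ofReal (gaussianKernel (t + v) c) := by
  have hint (i : Fin d) :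
      Integrable (fun u ↦ gaussianPDFReal 0 t.toNNReal (c i + u)) (gaussianReal 0 v) := by
    refine .of_bound ((measurable_gaussianPDFReal _ _).comp
      (measurable_const_add _)).aestronglyMeasurable (√(2 * π * t))⁻¹ (.of_forall fun u ↦ ?_)
    rw [Real.norm_of_nonneg (gaussianPDFReal_nonneg _ _ _), gaussianPDFReal_zero_toNNReal ht.le]
    exact mul_le_of_le_one_right (by positivity)
      (Real.exp_le_one_iff.2 (div_nonpos_of_nonpos_of_nonneg (by nlinarith) (by positivity)))
  have hprod := Integrable.fintype_prod (μ := fun _ ↦ gaussianReal 0 v) hint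
  simp only [gaussianKernel, Pi.add_apply]
  rw [← ofReal_integral_eq_lintegral_ofReal hprod
      (.of_forall fun u ↦ Finset.prod_nonneg fun i _ ↦ gaussianPDFReal_nonneg _ _ _),
    integral_fintype_prod_eq_prod fun i u ↦ gaussianPDFReal 0 t.toNNReal (c i + u)]
  simp only [integral_gaussianPDFReal_add hv (Real.toNNReal_pos.2 ht).ne',
    Real.toNNReal_add ht.le v.coe_nonneg, Real.toNNReal_coe]

lemma gaussianKernel_neg (t : ℝ) (a : Fin d → ℝ) : gaussianKernel t (-a) = gaussianKernel t a := by
  simp [gaussianKernel, gaussianPDFReal]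

lemma lintegral_gaussianKernel_sub {v : ℝ≥0} (hv : v ≠ 0) {t : ℝ} (ht : 0 < t) (c : Fin d → ℝ) :
    ∫⁻ u, ENNReal.ofReal (gaussianKernel t (c - u)) ∂isotropicGaussian d v =
      ENNReal.ofReal (gaussianKernel (t + v) c) := by
  simp only [← gaussianKernel_neg _ (c - _), neg_sub, sub_eq_neg_add _ c]
  rw [lintegral_gaussianKernel_add hv ht, gaussianKernel_neg]

/-- The convolution of the Newton kernel with the centred Gaussian of variance `s`: running the
heat kernel from time `s` on instead of time `0`. -/
def smoothedKernel (s : ℝ) (c : Fin d → ℝ) : ℝ≥0∞ :=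
  ∫⁻ t in Ioi s, ENNReal.ofReal (gaussianKernel t c)

lemma lintegral_Ioi_zero_add (f : ℝ → ℝ≥0∞) (s : ℝ) :
    ∫⁻ t in Ioi 0, f (t + s) = ∫⁻ t in Ioi s, f t := by
  have h := (measurePreserving_add_right volume s).setLIntegral_comp_preimage_emb
    (measurableEmbedding_addRight s) f (Ioi s)
  simpa using h

lemma measurable_greenE : Measurable fun q : (Fin d → ℝ) × (Fin d → ℝ) ↦ greenE d q.1 q.2 := by
  unfold greenE
  exact .ite (measurableSet_eq_fun measurable_fst measurable_snd) measurable_const (by fun_prop)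

lemma measurable_greenE_right (x : Fin d → ℝ) : Measurable (greenE d x) :=
  measurable_greenE.comp measurable_prodMk_left

lemma measurable_lintegral_greenE (ν : Measure (Fin d → ℝ)) [SFinite ν] :
    Measurable fun x ↦ ∫⁻ y, greenE d x y ∂ν :=
  measurable_greenE.lintegral_prod_right'

lemma newtonEnergy_map_add_gaussian (hd : 3 ≤ d) {v : ℝ≥0} (hv : v ≠ 0) (p q : Fin d → ℝ) :
    newtonEnergy ((isotropicGaussian d v).map (p + ·)) ((isotropicGaussian d v).map (q + ·)) =
      smoothedKernel (v + v) (p - q) := by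
  have hinner (a : Fin d → ℝ) : ∫⁻ b, greenE d (p + a) (q + b) ∂isotropicGaussian d v =
      ∫⁻ t in Ioi (0 : ℝ), ENNReal.ofReal (gaussianKernel (t + v) (p - q + a)) := by
    simp only [← lintegral_gaussianKernel hd]
    rw [lintegral_lintegral_swap (measurable_gaussianKernel.comp
      (f := fun u : (Fin d → ℝ) × ℝ ↦ (u.2, p + a - (q + u.1)))
      (by fun_prop)).ennreal_ofReal.aemeasurable]
    refine setLIntegral_congr_fun measurableSet_Ioi fun t ht ↦ ?_
    rw [← lintegral_gaussianKernel_sub hv ht]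
    simp only [add_sub_add_comm p, add_sub_assoc]
  rw [newtonEnergy, lintegral_map (measurable_lintegral_greenE _) (by fun_prop)]
  simp only [lintegral_map (measurable_greenE_right _)
    (measurable_const_add q), hinner]
  rw [lintegral_lintegral_swap (measurable_gaussianKernel.comp
    (f := fun u : (Fin d → ℝ) × ℝ ↦ (u.2 + v, p - q + u.1))
    (by fun_prop)).ennreal_ofReal.aemeasurable, smoothedKernel,
    ← lintegral_Ioi_zero_add _ (v + v : ℝ)]
  refine setLIntegral_congr_fun measurableSet_Ioi fun t ht ↦ ?_
  have ht : 0 < t := ht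
  rw [lintegral_gaussianKernel_add hv (by positivity), add_assoc]

lemma smoothedKernel_le_newtonKernel (hd : 3 ≤ d) {s : ℝ} (hs : 0 ≤ s) {c : Fin d → ℝ}
    (hc : c ≠ 0) : smoothedKernel s c ≤ ENNReal.ofReal (newtonKernel c) := by
  have h := lintegral_gaussianKernel hd c 0
  rw [greenE_of_ne hc, sub_zero] at h
  exact h ▸ lintegral_mono_set (Ioi_subset_Ioi hs)

lemma smoothedKernel_le_rpow (hd : 3 ≤ d) {s : ℝ} (hs : 0 < s) (c : Fin d → ℝ) :
    smoothedKernel s c ≤ ENNReal.ofReal (s ^ (1 - (d : ℝ) / 2) / (d / 2 - 1)) := by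
  have hp := neg_half_dim_lt_neg_one hd
  have hint : s ^ (1 - (d : ℝ) / 2) / (d / 2 - 1) = ∫ t in Ioi s, t ^ (-((d : ℝ) / 2)) := by
    rw [integral_Ioi_rpow_of_lt hp hs, neg_div, ← div_neg]
    congr 2 <;> ring
  rw [hint, ofReal_integral_eq_lintegral_ofReal (integrableOn_Ioi_rpow_of_lt hp hs)
    ((ae_restrict_mem (measurableSet_Ioi (a := s))).mono fun t ht ↦
      Real.rpow_nonneg (hs.trans ht).le _)]
  exact setLIntegral_mono' measurableSet_Ioi fun t ht ↦
    ENNReal.ofReal_le_ofReal (gaussianKernel_le_rpow (hs.trans ht) c)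

lemma newtonEnergy_mono {μ μ' ν ν' : Measure (Fin d → ℝ)} (hμ : μ ≤ μ') (hν : ν ≤ ν') :
    newtonEnergy μ ν ≤ newtonEnergy μ' ν' :=
  lintegral_mono' hμ fun _ ↦ lintegral_mono' hν le_rfl

lemma newtonEnergy_sum_smul {ι : Type*} (F : Finset ι) (a : ι → ℝ≥0∞)
    (κ : ι → Measure (Fin d → ℝ)) [∀ x, SFinite (κ x)] :
    newtonEnergy (∑ x ∈ F, a x • κ x) (∑ x ∈ F, a x • κ x) =
      ∑ x ∈ F, ∑ y ∈ F, newtonEnergy (κ x) (κ y) * a x * a y := by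
  have hm (y : ι) := measurable_lintegral_greenE (κ y)
  simp only [newtonEnergy, lintegral_finsetSum_measure, lintegral_smul_measure, smul_eq_mul]
  refine Finset.sum_congr rfl fun x _ ↦ ?_
  rw [lintegral_finsetSum _ fun y _ ↦ (hm y).const_mul _, Finset.mul_sum]
  refine Finset.sum_congr rfl fun y _ ↦ ?_
  rw [lintegral_const_mul _ (hm y)]
  ring

lemma newtonEnergy_smul_smul (a b : ℝ≥0∞) (μ ν : Measure (Fin d → ℝ)) [SFinite ν] :
    newtonEnergy (a • μ) (b • ν) = a * b * newtonEnergy μ ν := by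
  simp only [newtonEnergy, lintegral_smul_measure, smul_eq_mul]
  rw [lintegral_const_mul _ (measurable_lintegral_greenE ν), mul_assoc]

/-- The centred Gaussian of variance `v` conditioned on the sup-norm ball of radius `r`, translated
by `p`. -/
def truncGaussian (v : ℝ≥0) (r : ℝ) (p : Fin d → ℝ) : Measure (Fin d → ℝ) :=
  (isotropicGaussian d v)[|Metric.closedBall 0 r].map (p + ·)

lemma truncGaussian_le (v : ℝ≥0) (r : ℝ) (p : Fin d → ℝ) :
    truncGaussian v r p ≤ (isotropicGaussian d v (Metric.closedBall 0 r))⁻¹ •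
      (isotropicGaussian d v).map (p + ·) := by
  rw [truncGaussian, ProbabilityTheory.cond, Measure.map_smul]
  gcongr
  · exact measurable_const_add p
  · exact Measure.restrict_le_self

lemma newtonEnergy_truncGaussian_le (hd : 3 ≤ d) {v : ℝ≥0} (hv : v ≠ 0) (r : ℝ)
    (p q : Fin d → ℝ) :
    newtonEnergy (truncGaussian v r p) (truncGaussian v r q) ≤
      (isotropicGaussian d v (Metric.closedBall 0 r))⁻¹ *
        (isotropicGaussian d v (Metric.closedBall 0 r))⁻¹ * smoothedKernel (v + v) (p - q) := by
  rw [← newtonEnergy_map_add_gaussian hd hv, ← newtonEnergy_smul_smul]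
  exact newtonEnergy_mono (truncGaussian_le v r p) (truncGaussian_le v r q)

lemma isProbabilityMeasure_truncGaussian {v : ℝ≥0} {r : ℝ}
    (hr : isotropicGaussian d v (Metric.closedBall 0 r) ≠ 0) (p : Fin d → ℝ) :
    IsProbabilityMeasure (truncGaussian v r p) :=
  haveI := cond_isProbabilityMeasure hr
  Measure.isProbabilityMeasure_map (measurable_const_add p).aemeasurable

lemma truncGaussian_compl_eq_zero (v : ℝ≥0) {r : ℝ} {p : Fin d → ℝ} {A : Set (Fin d → ℝ)}
    (hAm : MeasurableSet A) (hA : ∀ u, ‖u‖ ≤ r → p + u ∈ A) : truncGaussian v r p Aᶜ = 0 := by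
  rw [truncGaussian, Measure.map_apply (measurable_const_add p) hAm.compl]
  exact (ae_cond_mem measurableSet_closedBall).mono fun u hu ↦ hA u (mem_closedBall_zero_iff.1 hu)

lemma exists_isotropicGaussian_closedBall (v : ℝ≥0) {q : ℝ} (hq : 1 < q) :
    ∃ r : ℝ, isotropicGaussian d v (Metric.closedBall 0 r) ≠ 0 ∧
      (isotropicGaussian d v (Metric.closedBall 0 r))⁻¹ *
        (isotropicGaussian d v (Metric.closedBall 0 r))⁻¹ ≤ ENNReal.ofReal q := by
  have hmono : Monotone fun n : ℕ ↦ Metric.closedBall (0 : Fin d → ℝ) n :=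
    fun _ _ hab ↦ Metric.closedBall_subset_closedBall (Nat.cast_le.2 hab)
  have hmass := tendsto_measure_iUnion_atTop (μ := isotropicGaussian d v) hmono
  rw [Metric.iUnion_closedBall_nat, measure_univ] at hmass
  have hinv := tendsto_inv_iff.2 hmass
  rw [inv_one] at hinv
  have hsq := ENNReal.Tendsto.mul hinv (.inl one_ne_zero) hinv (.inl one_ne_zero)
  rw [one_mul] at hsq
  obtain ⟨n, hn, hn0⟩ := ((hsq.eventually_le_const (ENNReal.one_lt_ofReal.2 hq)).and
    (hmass.eventually_ne one_ne_zero)).exists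
  exact ⟨n, hn0, hn⟩

/-- The minimal Newtonian energy of a probability measure on `A`; `brCap d A` is its inverse. -/
def minNewtonEnergy (A : Set (Fin d → ℝ)) : ℝ≥0∞ :=
  ⨅ μ ∈ {μ : Measure (Fin d → ℝ) | IsProbabilityMeasure μ ∧ μ Aᶜ = 0}, newtonEnergy μ μ

lemma minNewtonEnergy_le_mul (hd : 3 ≤ d) {F : Finset (Fin d → ℤ)} {A : Set (Fin d → ℝ)}
    (κ : (Fin d → ℤ) → Measure (Fin d → ℝ)) [∀ x, IsProbabilityMeasure (κ x)]
    (hA : ∀ x ∈ F, κ x Aᶜ = 0) {c : ℝ} (hc : 0 ≤ c)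
    (hκ : ∀ x ∈ F, ∀ y ∈ F, newtonEnergy (κ x) (κ y) ≤ ENNReal.ofReal (c * greenZ d (y - x)))
    {e : ℝ} (he : e ∈ discEnergies d F) : minNewtonEnergy A ≤ ENNReal.ofReal (c * e) := by
  obtain ⟨w, hw0, -, hw1, rfl⟩ := he
  set μ := ∑ x ∈ F, ENNReal.ofReal (w x) • κ x with hμ
  have hμ1 : IsProbabilityMeasure μ := ⟨by
    simp [hμ, ← ENNReal.ofReal_sum_of_nonneg fun x _ ↦ hw0 x, hw1]⟩
  have hμA : μ Aᶜ = 0 := by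
    simp only [hμ, Measure.finsetSum_apply, Measure.smul_apply, smul_eq_mul]
    exact Finset.sum_eq_zero fun x hx ↦ by rw [hA x hx, mul_zero]
  calc minNewtonEnergy A ≤ newtonEnergy μ μ := iInf₂_le μ ⟨hμ1, hμA⟩
    _ = ∑ x ∈ F, ∑ y ∈ F,
        newtonEnergy (κ x) (κ y) * ENNReal.ofReal (w x) * ENNReal.ofReal (w y) :=
      newtonEnergy_sum_smul F _ κ
    _ ≤ ∑ x ∈ F, ∑ y ∈ F,
        ENNReal.ofReal (c * greenZ d (y - x)) * ENNReal.ofReal (w x) * ENNReal.ofReal (w y) := by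
      gcongr with x hx y hy
      exact hκ x hx y hy
    _ = ENNReal.ofReal (c * ∑ x ∈ F, ∑ y ∈ F, greenZ d (y - x) * w x * w y) := by
      rw [← ofReal_sum_sum_mul F (G := fun x y ↦ c * greenZ d (y - x))
        (fun _ _ ↦ mul_nonneg hc (greenZ_pos hd _).le) hw0 hw0]
      simp only [Finset.mul_sum, mul_assoc]

lemma exists_pos_le_greenZ (hd : 3 ≤ d) (R : ℝ) :
    ∃ m, 0 < m ∧ ∀ x : Fin d → ℤ, ‖x‖ ≤ R → m ≤ greenZ d x := by
  rcases (Metric.closedBall (0 : Fin d → ℤ) R).eq_empty_or_nonempty with hR | hR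
  · exact ⟨1, one_pos, fun x hx ↦ absurd (mem_closedBall_zero_iff.2 hx) (by simp [hR])⟩
  · obtain ⟨x₀, -, hx₀⟩ := Set.exists_min_image _ (greenZ d)
      (isCompact_closedBall (0 : Fin d → ℤ) R).finite_of_discrete hR
    exact ⟨_, greenZ_pos hd x₀, fun x hx ↦ hx₀ x (mem_closedBall_zero_iff.2 hx)⟩

/-- Far from the origin this is the local central limit theorem; near it, `s` is taken so large that
the smoothed kernel is below the minimum of `g̃`. -/
lemma exists_smoothedKernel_le_mul_greenZ (hd : 3 ≤ d) {κ q : ℝ} (hκ : 0 < κ)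
    (hq : κ ^ (2 - (d : ℝ)) < q) :
    ∃ s : ℝ, 0 < s ∧ ∀ (a : Fin d → ℝ) (x : Fin d → ℤ),
      κ * euclNorm (realVec x) ≤ euclNorm a →
        smoothedKernel s a ≤ ENNReal.ofReal (q / d * greenZ d x) := by
  have : (0 : ℝ) < d := by exact_mod_cast (by omega : 0 < d)
  have hd2 : 0 < (d : ℝ) / 2 - 1 := by linarith [neg_half_dim_lt_neg_one hd]
  have hκd : 0 < κ ^ (2 - (d : ℝ)) := Real.rpow_pos_of_pos hκ _
  have hq0 : 0 < q := hκd.trans hq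
  obtain ⟨R, hR, hfar⟩ := exists_greenZ_le_and_newtonKernel_le hd ((one_lt_div hκd).2 hq)
  obtain ⟨m, hm, hnear⟩ := exists_pos_le_greenZ hd R
  obtain ⟨s, hsm, hs⟩ := (((tendsto_rpow_neg_atTop hd2).eventually_le_const
    (show 0 < q / d * m * ((d : ℝ) / 2 - 1) by positivity)).and (eventually_gt_atTop 0)).exists
  rw [neg_sub] at hsm
  refine ⟨s, hs, fun a x hax ↦ ?_⟩
  rcases le_or_gt R (euclNorm (realVec x)) with hx | hx
  · have hx0 : 0 < euclNorm (realVec x) := hR.trans_le hx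
    have ha0 : a ≠ 0 := euclNorm_pos_iff.1 ((mul_pos hκ hx0).trans_le hax)
    refine (smoothedKernel_le_newtonKernel hd hs.le ha0).trans (ENNReal.ofReal_le_ofReal ?_)
    calc newtonKernel a ≤ κ ^ (2 - (d : ℝ)) * newtonKernel (realVec x) :=
          newtonKernel_le_rpow_mul hd hκ (euclNorm_pos_iff.1 hx0) hax
      _ = κ ^ (2 - (d : ℝ)) / d * (d * newtonKernel (realVec x)) := by field_simp
      _ ≤ κ ^ (2 - (d : ℝ)) / d * (q / κ ^ (2 - (d : ℝ)) * greenZ d x) := by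
        exact mul_le_mul_of_nonneg_left (hfar x hx).2 (by positivity)
      _ = q / d * greenZ d x := by field_simp
  · refine (smoothedKernel_le_rpow hd hs a).trans (ENNReal.ofReal_le_ofReal ?_)
    have hxm : m ≤ greenZ d x :=
      hnear x (norm_realVec x ▸ (norm_le_euclNorm _).trans hx.le)
    rw [div_le_iff₀ hd2]
    exact hsm.trans (by gcongr)

lemma exists_newtonEnergy_truncGaussian_le_mul_greenZ (hd : 3 ≤ d) {κ q : ℝ} (hκ : 0 < κ)
    (hq : κ ^ (2 - (d : ℝ)) < q) :
    ∃ (v : ℝ≥0) (r : ℝ), isotropicGaussian d v (Metric.closedBall 0 r) ≠ 0 ∧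
      ∀ (p p' : Fin d → ℝ) (x : Fin d → ℤ), κ * euclNorm (realVec x) ≤ euclNorm (p - p') →
        newtonEnergy (truncGaussian v r p) (truncGaussian v r p') ≤
          ENNReal.ofReal (q / d * greenZ d x) := by
  obtain ⟨q', hκq', hq'q⟩ := exists_between hq
  have hq' : 0 < q' := (Real.rpow_pos_of_pos hκ _).trans hκq'
  obtain ⟨s, hs, hsmooth⟩ := exists_smoothedKernel_le_mul_greenZ hd hκ hκq'
  lift s to ℝ≥0 using hs.le
  have hv : s / 2 ≠ 0 := (half_pos (NNReal.coe_pos.1 hs)).ne'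
  obtain ⟨r, hr, hmass⟩ :=
    exists_isotropicGaussian_closedBall (d := d) (s / 2) ((one_lt_div hq').2 hq'q)
  refine ⟨s / 2, r, hr, fun p p' x hx ↦ ?_⟩
  calc newtonEnergy (truncGaussian (s / 2) r p) (truncGaussian (s / 2) r p')
      ≤ _ * smoothedKernel s (p - p') := by
        simpa only [NNReal.coe_div, NNReal.coe_two, add_halves] using
          newtonEnergy_truncGaussian_le hd hv r p p'
    _ ≤ ENNReal.ofReal (q / q') * ENNReal.ofReal (q' / d * greenZ d x) :=
        mul_le_mul' hmass (hsmooth _ _ hx)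
    _ = ENNReal.ofReal (q / d * greenZ d x) := by
        rw [← ENNReal.ofReal_mul (div_nonneg (hq'.trans hq'q).le hq'.le), ← mul_assoc,
          div_mul_div_cancel₀ hq'.ne']

lemma realVec_mem_boxR {L : ℕ} {z x : Fin d → ℤ} (hx : x ∈ boxZ d L z) :
    realVec x ∈ boxR d L z := by
  obtain ⟨h₁, h₂⟩ := Finset.mem_Icc.1 hx
  refine ⟨fun i ↦ Int.cast_le.2 (h₁ i), fun i ↦ ?_⟩
  have hi : x i ≤ z i + L := (h₂ i).trans (sub_le_self _ zero_le_one)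
  simpa [realVec] using Int.cast_le (R := ℝ).2 hi

lemma boxContraction_add_mem_boxR {L : ℕ} {θ r : ℝ} (hθ : θ < 1) (hr : 2 * r ≤ θ * L)
    {z : Fin d → ℤ} {x u : Fin d → ℝ} (hx : x ∈ boxR d L z) (hu : ‖u‖ ≤ r) :
    boxContraction θ r z x + u ∈ boxR d L z := by
  have hcoord (i : Fin d) : z i ≤ (boxContraction θ r z x + u) i ∧
      (boxContraction θ r z x + u) i ≤ z i + L := by
    obtain ⟨h₁, h₂⟩ := boxContraction_mem_Icc hθ r hx i
    obtain ⟨hu₁, hu₂⟩ := abs_le.1 ((norm_le_pi_norm u i).trans hu)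
    rw [Pi.add_apply]
    constructor <;> linarith
  exact ⟨fun i ↦ (hcoord i).1, fun i ↦ (hcoord i).2⟩

theorem exists_minNewtonEnergy_le (hd : 3 ≤ d) {γ ε : ℝ} (hγ : 0 < γ) (hε : 0 < ε) :
    ∃ L₁ : ℕ, ∀ L ≥ L₁, ∀ 𝒞 : Finset (Fin d → ℤ), WellSeparated γ L 𝒞 →
      ∀ e ∈ discEnergies d (𝒞.biUnion (boxZ d L)),
        minNewtonEnergy (⋃ z ∈ 𝒞, boxR d L z) ≤ ENNReal.ofReal ((1 + ε) / d * e) := by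
  obtain ⟨θ, hθ, hκ, hκε⟩ := exists_rpow_one_sub_mul_le (√d * (1 + γ⁻¹)) (2 - (d : ℝ))
    (show 1 < 1 + ε / 2 by linarith)
  obtain ⟨v, r, hr, henergy⟩ := exists_newtonEnergy_truncGaussian_le_mul_greenZ hd hκ
    (hκε.trans_lt (show 1 + ε / 2 < 1 + ε by linarith))
  refine ⟨⌈2 * r / θ⌉₊, fun L hL 𝒞 hsep e he ↦ ?_⟩
  have hrL : 2 * r ≤ θ * L := (div_le_iff₀' hθ.1).1 (Nat.ceil_le.1 hL)
  have hcorner (x) (hx : x ∈ 𝒞.biUnion (boxZ d L)) : ∃ z ∈ 𝒞, realVec x ∈ boxR d L z :=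
    (Finset.mem_biUnion.1 hx).imp fun _ h ↦ ⟨h.1, realVec_mem_boxR h.2⟩
  choose! corner hcorner𝒞 hcornerR using hcorner
  let p (x : Fin d → ℤ) : Fin d → ℝ := boxContraction θ r (corner x) (realVec x)
  have (x : Fin d → ℤ) := isProbabilityMeasure_truncGaussian hr (p x)
  refine minNewtonEnergy_le_mul hd (fun x ↦ truncGaussian v r (p x)) (fun x hx ↦ ?_)
    (by positivity) (fun x hx y hy ↦ henergy _ _ _ ?_) he
  · refine truncGaussian_compl_eq_zero _
      (Finset.measurableSet_biUnion _ fun _ _ ↦ measurableSet_Icc) fun u hu ↦ ?_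
    exact mem_biUnion (hcorner𝒞 x hx) (boxContraction_add_mem_boxR hθ.2 hrL (hcornerR x hx) hu)
  · rw [realVec_sub, euclNorm_sub_comm (realVec y)]
    exact hsep.mul_euclNorm_le_boxContraction hγ hθ.1 r (hcorner𝒞 x hx) (hcorner𝒞 y hy)
      (hcornerR x hx) (hcornerR y hy)

/-! ### The ratio of the capacities -/

lemma discEnergies_nonempty {F : Finset (Fin d → ℤ)} (hF : F.Nonempty) :
    (discEnergies d F).Nonempty := by
  classical
  obtain ⟨x₀, hx₀⟩ := hF
  exact ⟨_, Pi.single x₀ 1, (Pi.single_nonneg (α := fun _ ↦ ℝ)).2 zero_le_one,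
    fun x hx ↦ Pi.single_eq_of_ne (ne_of_mem_of_not_mem hx₀ hx).symm _, by simp [hx₀], rfl⟩

lemma sInf_discEnergies_pos (hd : 3 ≤ d) {F : Finset (Fin d → ℤ)} (hF : F.Nonempty) :
    0 < sInf (discEnergies d F) := by
  obtain ⟨p, -, hp⟩ := Finset.exists_min_image (F ×ˢ F) (fun p ↦ greenZ d (p.2 - p.1))
    (hF.product hF)
  refine (greenZ_pos hd (p.2 - p.1)).trans_le (le_csInf (discEnergies_nonempty hF) ?_)
  rintro _ ⟨w, hw0, -, hw1, rfl⟩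
  calc greenZ d (p.2 - p.1) = ∑ x ∈ F, ∑ y ∈ F, greenZ d (p.2 - p.1) * w x * w y := by
        simp only [← Finset.mul_sum, hw1, mul_one]
    _ ≤ ∑ x ∈ F, ∑ y ∈ F, greenZ d (y - x) * w x * w y := by
        gcongr with x hx y hy
        · exact hw0 y
        · exact hw0 x
        · exact hp (x, y) (Finset.mk_mem_product hx hy)

lemma sInf_discEnergies_le_mul_toReal {F : Finset (Fin d → ℤ)} {A : Set (Fin d → ℝ)} {c : ℝ}
    (hc : 0 < c) (hA : minNewtonEnergy A ≠ ⊤)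
    (h : ∀ μ : Measure (Fin d → ℝ), IsProbabilityMeasure μ → μ Aᶜ = 0 →
      ENNReal.ofReal (sInf (discEnergies d F)) ≤ ENNReal.ofReal c * newtonEnergy μ μ) :
    sInf (discEnergies d F) ≤ c * (minNewtonEnergy A).toReal := by
  have hc0 : ENNReal.ofReal c ≠ 0 := (ENNReal.ofReal_pos.2 hc).ne'
  have hle : ENNReal.ofReal (sInf (discEnergies d F)) / ENNReal.ofReal c ≤ minNewtonEnergy A :=
    le_iInf₂ fun μ hμ ↦ by
      rw [ENNReal.div_le_iff' hc0 ENNReal.ofReal_ne_top]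
      exact h μ hμ.1 hμ.2
  rw [ENNReal.div_le_iff' hc0 ENNReal.ofReal_ne_top, ← ENNReal.ofReal_toReal hA,
    ← ENNReal.ofReal_mul hc.le] at hle
  exact (ENNReal.ofReal_le_ofReal_iff (by positivity)).1 hle

lemma toReal_minNewtonEnergy_le_mul_sInf (hd : 3 ≤ d) {F : Finset (Fin d → ℤ)}
    (hF : F.Nonempty) {A : Set (Fin d → ℝ)} {c : ℝ} (hc : 0 < c)
    (h : ∀ e ∈ discEnergies d F, minNewtonEnergy A ≤ ENNReal.ofReal (c * e)) :
    (minNewtonEnergy A).toReal ≤ c * sInf (discEnergies d F) := by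
  rw [← div_le_iff₀' hc]
  refine le_csInf (discEnergies_nonempty hF) fun e he ↦ ?_
  have he0 : 0 ≤ e :=
    (sInf_discEnergies_pos hd hF).le.trans (csInf_le (bddBelow_discEnergies hd F) he)
  exact (div_le_iff₀' hc).2 (ENNReal.toReal_le_of_le_ofReal (by positivity) (h e he))

lemma boxZ_nonempty {L : ℕ} (hL : 1 ≤ L) (z : Fin d → ℤ) : (boxZ d L z).Nonempty :=
  ⟨z, Finset.mem_Icc.2 ⟨le_rfl, fun i ↦ by simp only; omega⟩⟩

lemma minNewtonEnergy_ne_top {F : Finset (Fin d → ℤ)} (hF : F.Nonempty) {A : Set (Fin d → ℝ)}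
    {c : ℝ} (h : ∀ e ∈ discEnergies d F, minNewtonEnergy A ≤ ENNReal.ofReal (c * e)) :
    minNewtonEnergy A ≠ ⊤ :=
  have ⟨e, he⟩ := discEnergies_nonempty hF
  ((h e he).trans_lt ENNReal.ofReal_lt_top).ne

lemma discCap_div_toReal_brCap (F : Finset (Fin d → ℤ)) (A : Set (Fin d → ℝ)) :
    d * discCap d F / (brCap d A).toReal =
      d * (minNewtonEnergy A).toReal / sInf (discEnergies d F) := by
  change d * (sInf (discEnergies d F))⁻¹ / ((minNewtonEnergy A)⁻¹).toReal = _
  rw [ENNReal.toReal_inv, div_inv_eq_mul, mul_right_comm,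
    div_eq_mul_inv]

theorem statement19_general (hd : 3 ≤ d) {γ δ : ℝ} (hγ : 0 < γ) (hδ : 0 < δ) :
    ∃ L₁ : ℕ, ∀ L ≥ L₁, ∀ 𝒞 : Finset (Fin d → ℤ), 𝒞.Nonempty → WellSeparated γ L 𝒞 →
      1 - δ ≤ d * discCap d (𝒞.biUnion (boxZ d L)) / (brCap d (⋃ z ∈ 𝒞, boxR d L z)).toReal ∧
      d * discCap d (𝒞.biUnion (boxZ d L)) / (brCap d (⋃ z ∈ 𝒞, boxR d L z)).toReal ≤ 1 + δ := by
  obtain ⟨L₁, hdisc⟩ := exists_sInf_discEnergies_le hd hγ hδ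
  obtain ⟨L₂, hnewton⟩ := exists_minNewtonEnergy_le hd hγ hδ
  refine ⟨max 1 (max L₁ L₂), fun L hL 𝒞 h𝒞 hsep ↦ ?_⟩
  simp only [ge_iff_le, max_le_iff] at hL
  obtain ⟨hL0, hL₁, hL₂⟩ := hL
  have hd0 : (0 : ℝ) < d := Nat.cast_pos.2 (by omega)
  have hF : (𝒞.biUnion (boxZ d L)).Nonempty := h𝒞.biUnion fun z _ ↦ boxZ_nonempty hL0 z
  have hpos := sInf_discEnergies_pos hd hF
  have hle := hnewton L hL₂ 𝒞 hsep
  have hlower := sInf_discEnergies_le_mul_toReal (by positivity) (minNewtonEnergy_ne_top hF hle)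
    fun μ hμ hμ0 ↦ hdisc L hL₁ 𝒞 hsep μ hμ0
  have hupper := toReal_minNewtonEnergy_le_mul_sInf hd hF (by positivity) hle
  rw [discCap_div_toReal_brCap, le_div_iff₀ hpos, div_le_iff₀ hpos]
  have hinv : 1 - δ ≤ (1 + δ)⁻¹ := by
    rw [← one_div, le_div_iff₀ (by positivity)]
    nlinarith only [sq_nonneg δ]
  constructor
  · calc (1 - δ) * sInf (discEnergies d (𝒞.biUnion (boxZ d L)))
        ≤ (1 + δ)⁻¹ * sInf (discEnergies d (𝒞.biUnion (boxZ d L))) := by gcongr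
      _ ≤ d * (minNewtonEnergy (⋃ z ∈ 𝒞, boxR d L z)).toReal := by
          rwa [inv_mul_le_iff₀ (by positivity), ← mul_assoc]
  · rwa [div_mul_eq_mul_div, le_div_iff₀' hd0] at hupper

/-- Proposition A.1: for every `δ > 0` there are `K₀`, `L₁` such that for
`K ≥ max(K₀,100)`, `L ≥ max(L₁,1)` and every nonempty finite `𝒞 ⊆ Lℤ^d` with points at
mutual sup-distance `≥ KL`, `1-δ ≤ d·cap_{ℤ^d}(C)/cap(Γ) ≤ 1+δ`, where `C` is the union of
the boxes `B_z`, `z ∈ 𝒞`, and `Γ` the union of their `ℝ^d`-fillings. -/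
theorem statement19 (d : ℕ) (hd : 3 ≤ d) (δ : ℝ) (hδ : 0 < δ) :
    ∃ K₀ L₁ : ℕ, ∀ K L : ℕ, K₀ ≤ K → L₁ ≤ L → 100 ≤ K → 1 ≤ L →
    ∀ 𝒞 : Finset (Fin d → ℤ), 𝒞.Nonempty →
      (∀ z ∈ 𝒞, ∀ i, (L : ℤ) ∣ z i) →
      (∀ z ∈ 𝒞, ∀ z' ∈ 𝒞, z ≠ z' → ∃ i, ((K * L : ℕ) : ℤ) ≤ |z i - z' i|) →
      1 - δ ≤ (d : ℝ) * discCap d (𝒞.biUnion (boxZ d L)) /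
          (brCap d (⋃ z ∈ 𝒞, boxR d L z)).toReal ∧
      (d : ℝ) * discCap d (𝒞.biUnion (boxZ d L)) /
          (brCap d (⋃ z ∈ 𝒞, boxR d L z)).toReal ≤ 1 + δ := by
  obtain ⟨L₁, h⟩ := statement19_general hd one_pos hδ
  refine ⟨0, L₁, fun K L _ hL hK _ 𝒞 h𝒞 _ hsep ↦ h L hL 𝒞 h𝒞 fun z hz z' hz' hne ↦ ?_⟩
  obtain ⟨i, hi⟩ := hsep z hz z' hz' hne
  have hK2 : ((1 + 1 : ℕ) : ℝ) ≤ K := Nat.cast_le.2 (by omega)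
  calc (1 + 1) * (L : ℝ) ≤ K * L := by gcongr; exact_mod_cast hK2
    _ ≤ ‖(z - z') i‖ := by rw [Int.norm_eq_abs]; exact_mod_cast hi
    _ ≤ ‖z - z'‖ := norm_le_pi_norm (z - z') i
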